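/- arXiv:2309.15322 — 2 statements merged into one kernel-verified Lean document; each statement's English description precedes it below -/
import Mathlib

section
/- Suppose n ≥ 3, k ≥ 2, the partition is balanced, E ∈ ℝ^{V×V} is any symmetric matrix with ‖E‖₂ ≤ μ/(100·log n), and Ĝ := G + E. Then for every x ∈ ℝ^V: (1/2)·‖P_{Ĝ_k} x‖ ≤ ‖φ(Ĝ) x‖ ≤ (3/2)·‖P_{Ĝ_k} x‖ + ‖x‖·n^{−log log n}, and (1/2)·‖P_{G_k} x‖ ≤ ‖φ(G) x‖ ≤ (3/2)·‖P_{G_k} x‖. -/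
open MeasureTheory ProbabilityTheory Matrix Finset

namespace SBM

/-- Euclidean norm of a vector. -/
noncomputable def enorm {m : Type*} [Fintype m] (x : m → ℝ) : ℝ :=
  Real.sqrt (∑ i, x i ^ 2)

/-- Spectral (ℓ²-operator) norm of a matrix. -/
noncomputable def specNorm {n : ℕ} (A : Matrix (Fin n) (Fin n) ℝ) : ℝ :=
  ‖Matrix.toEuclideanCLM (𝕜 := ℝ) A‖

/-- The `2 → ∞` norm: maximal Euclidean norm of a row. -/
noncomputable def n2i {n : ℕ} (A : Matrix (Fin n) (Fin n) ℝ) : ℝ :=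
  ⨆ i : Fin n, enorm (A i)

/-- The mean matrix `G` of the SSBM with cluster assignment `cl`. -/
def meanMatrix (n k : ℕ) (p q : ℝ) (cl : Fin n → Fin k) : Matrix (Fin n) (Fin n) ℝ :=
  Matrix.of fun u v => if cl u = cl v then p else q

/-- The size of cluster `i`. -/
def clusterSize {n k : ℕ} (cl : Fin n → Fin k) (i : Fin k) : ℕ :=
  (Finset.univ.filter fun v => cl v = i).card

/-- The partition is balanced: every cluster size is within a `1 ± 1/(16 log n)` factor
of `n / k`. -/
noncomputable def Balanced (n k : ℕ) (cl : Fin n → Fin k) : Prop :=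
  ∀ i : Fin k,
    (1 - 1 / (16 * Real.log n)) * ((n : ℝ) / k) ≤ (clusterSize cl i : ℝ) ∧
    (clusterSize cl i : ℝ) ≤ (1 + 1 / (16 * Real.log n)) * ((n : ℝ) / k)

/-- `lam, v` is a spectral decomposition of `A`: eigenvalues in non-increasing order with
an orthonormal eigenbasis. -/
def IsSpectralDecomp {n : ℕ} (A : Matrix (Fin n) (Fin n) ℝ)
    (lam : Fin n → ℝ) (v : Fin n → Fin n → ℝ) : Prop :=
  Antitone lam ∧
  (∀ i j, dotProduct (v i) (v j) = if i = j then (1 : ℝ) else 0) ∧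
  A = ∑ i, lam i • Matrix.vecMulVec (v i) (v i)

/-- Orthogonal projection onto the span of the top `k` eigenvectors `v 0, …, v (k-1)`. -/
noncomputable def projTop {n : ℕ} (k : ℕ) (v : Fin n → Fin n → ℝ) :
    Matrix (Fin n) (Fin n) ℝ :=
  ∑ i ∈ Finset.univ.filter (fun i : Fin n => (i : ℕ) < k), Matrix.vecMulVec (v i) (v i)

/-- The column of `A` indexed by `u`. -/
def column {n : ℕ} (A : Matrix (Fin n) (Fin n) ℝ) (u : Fin n) : Fin n → ℝ :=
  fun i => A i u

/-- `ψ(M) = A·M² + B·M` where `A = -1/(λ₁μ)`, `B = 1/λ₁ + 1/μ`. -/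
noncomputable def psiM {n : ℕ} (lam1 mu : ℝ) (M : Matrix (Fin n) (Fin n) ℝ) :
    Matrix (Fin n) (Fin n) ℝ :=
  (-(1 / (lam1 * mu))) • (M * M) + (1 / lam1 + 1 / mu) • M

/-- `φ(M) = ψ(M)^r`. -/
noncomputable def phiM {n : ℕ} (lam1 mu : ℝ) (r : ℕ) (M : Matrix (Fin n) (Fin n) ℝ) :
    Matrix (Fin n) (Fin n) ℝ :=
  psiM lam1 mu M ^ r

/-- `ψ(t) = A·t² + B·t` where `A = -1/(λ₁μ)`, `B = 1/λ₁ + 1/μ`. -/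
noncomputable def psiR (lam1 mu t : ℝ) : ℝ :=
  (-(1 / (lam1 * mu))) * t ^ 2 + (1 / lam1 + 1 / mu) * t

/-- `φ(t) = ψ(t)^r`. -/
noncomputable def phiR (lam1 mu : ℝ) (r : ℕ) (t : ℝ) : ℝ := psiR lam1 mu t ^ r

end SBM

/-!
On an eigenbasis of a symmetric matrix `M`, the matrix `φ(M)` multiplies the `i`-th coordinate by
`φ(λᵢ)`, so it suffices to locate the eigenvalues and to evaluate `φ` there. Courant–Fischer,
tested on vectors constant on clusters, on vectors with zero sum, and on vectors with zero sum
over every cluster, shows that `λ₂, …, λ_k` of `G` are within a factor `1 ± 1/(16 log n)` of `μ`,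
that `λ₁` satisfies the same lower bound, and that all other eigenvalues vanish; by Weyl's
inequality `E` moves each of them by at most `μ/(100 log n)`. Now `ψ` is `1` at `λ₁` and `μ`, and
`0` at `0`. Hence it is `1 + O(1/log n)` on the top `k` eigenvalues, whose `r`-th power stays in
`[1/2, 3/2]` for `r ≤ 2 log n`, and at most `1/log n` on the others, whose `r`-th power is at most
`(log n)^(-log n) = n^(-log log n)` as soon as `r ≥ log n`.
-/

namespace SBM

section Norms

variable {ι : Type*} [Fintype ι] (x : ι → ℝ)

lemma enorm_nonneg : 0 ≤ enorm x := Real.sqrt_nonneg _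

lemma enorm_eq_norm_toLp : enorm x = ‖WithLp.toLp 2 x‖ := by
  simp [enorm, EuclideanSpace.norm_eq]

lemma sq_enorm : enorm x ^ 2 = x ⬝ᵥ x := by
  rw [enorm_eq_norm_toLp, EuclideanSpace.real_norm_sq_eq]
  simp only [dotProduct, sq]

lemma abs_dotProduct_mulVec_le_specNorm {n : ℕ} (E : Matrix (Fin n) (Fin n) ℝ) (x : Fin n → ℝ) :
    |x ⬝ᵥ (E *ᵥ x)| ≤ specNorm E * (x ⬝ᵥ x) := by
  let T := Matrix.toEuclideanCLM (𝕜 := ℝ) E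
  let y : EuclideanSpace ℝ (Fin n) := WithLp.toLp 2 x
  calc |x ⬝ᵥ (E *ᵥ x)| = |inner ℝ (T y) y| := by
        simp [T, y, EuclideanSpace.inner_eq_star_dotProduct]
    _ ≤ ‖T y‖ * ‖y‖ := abs_real_inner_le_norm _ _
    _ ≤ ‖T‖ * ‖y‖ * ‖y‖ := by gcongr; exact T.le_opNorm y
    _ = specNorm E * (x ⬝ᵥ x) := by
        rw [← sq_enorm, enorm_eq_norm_toLp, sq, ← mul_assoc, specNorm]

end Norms

/-- `v` is an orthonormal basis of left eigenvectors of `M`, with eigenvalues `f`. Unlike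
`IsSpectralDecomp`, this imposes no order on the eigenvalues, so that it passes from `M` to
polynomials in `M`. -/
structure IsEigenbasis {ι : Type*} [Fintype ι] [DecidableEq ι] (M : Matrix ι ι ℝ) (f : ι → ℝ)
    (v : ι → ι → ℝ) : Prop where
  dotProduct_eq : ∀ i j, v i ⬝ᵥ v j = if i = j then 1 else 0
  vecMul_eq : ∀ i, v i ᵥ* M = f i • v i

namespace IsEigenbasis

section Fintype

variable {ι : Type*} [Fintype ι] [DecidableEq ι] {M : Matrix ι ι ℝ} {f : ι → ℝ} {v : ι → ι → ℝ}

lemma dotProduct_eq_sum (h : IsEigenbasis M f v) (x y : ι → ℝ) :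
    x ⬝ᵥ y = ∑ i, (v i ⬝ᵥ x) * (v i ⬝ᵥ y) := by
  have orthogonal : (of v)ᵀ * of v = 1 := by
    refine mul_eq_one_comm.mp ?_
    ext i j
    exact (h.dotProduct_eq i j).trans one_apply.symm
  calc x ⬝ᵥ y = x ⬝ᵥ (((of v)ᵀ * of v) *ᵥ y) := by rw [orthogonal, one_mulVec]
    _ = (of v *ᵥ x) ⬝ᵥ (of v *ᵥ y) := by
        rw [← mulVec_mulVec, dotProduct_mulVec, vecMul_transpose]

lemma dotProduct_mulVec (h : IsEigenbasis M f v) (i : ι) (x : ι → ℝ) :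
    v i ⬝ᵥ (M *ᵥ x) = f i * (v i ⬝ᵥ x) := by
  rw [Matrix.dotProduct_mulVec, h.vecMul_eq, smul_dotProduct, smul_eq_mul]

lemma dotProduct_self_eq_sum (h : IsEigenbasis M f v) (x : ι → ℝ) :
    x ⬝ᵥ x = ∑ i, (v i ⬝ᵥ x) ^ 2 := by
  simp only [h.dotProduct_eq_sum x x, sq]

lemma quadForm_eq_sum (h : IsEigenbasis M f v) (x : ι → ℝ) :
    x ⬝ᵥ (M *ᵥ x) = ∑ i, f i * (v i ⬝ᵥ x) ^ 2 := by
  rw [h.dotProduct_eq_sum]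
  exact sum_congr rfl fun i _ => by rw [h.dotProduct_mulVec]; ring

lemma sq_enorm_mulVec (h : IsEigenbasis M f v) (x : ι → ℝ) :
    enorm (M *ᵥ x) ^ 2 = ∑ i, f i ^ 2 * (v i ⬝ᵥ x) ^ 2 := by
  simp only [sq_enorm, h.dotProduct_self_eq_sum, h.dotProduct_mulVec, mul_pow]

lemma pow (h : IsEigenbasis M f v) (r : ℕ) : IsEigenbasis (M ^ r) (fun i => f i ^ r) v where
  dotProduct_eq := h.dotProduct_eq
  vecMul_eq i := by
    induction r with
    | zero => simp
    | succ r ih => rw [pow_succ, ← vecMul_vecMul, ih, smul_vecMul, h.vecMul_eq, smul_smul, pow_succ]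

end Fintype

variable {n : ℕ} {M : Matrix (Fin n) (Fin n) ℝ} {f : Fin n → ℝ} {v : Fin n → Fin n → ℝ}

lemma psiM (h : IsEigenbasis M f v) (l m : ℝ) :
    IsEigenbasis (psiM l m M) (fun i => psiR l m (f i)) v where
  dotProduct_eq := h.dotProduct_eq
  vecMul_eq i := by
    simp only [SBM.psiM, psiR, vecMul_add, vecMul_smul, ← vecMul_vecMul, h.vecMul_eq, smul_vecMul,
      smul_smul, ← add_smul]
    congr 1
    ring

lemma phiM (h : IsEigenbasis M f v) (l m : ℝ) (r : ℕ) :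
    IsEigenbasis (phiM l m r M) (fun i => phiR l m r (f i)) v :=
  (h.psiM l m).pow r

lemma projTop (h : IsEigenbasis M f v) (k : ℕ) :
    IsEigenbasis (projTop k v) (fun i => if (i : ℕ) < k then 1 else 0) v where
  dotProduct_eq := h.dotProduct_eq
  vecMul_eq i := by
    simp [SBM.projTop, vecMul_sum, vecMul_vecMulVec, h.dotProduct_eq, sum_ite_eq]

lemma mul_enorm_projTop_le (h : IsEigenbasis M f v) {k : ℕ} {a : ℝ} (ha : 0 ≤ a)
    (hf : ∀ i : Fin n, (i : ℕ) < k → a ≤ f i) (x : Fin n → ℝ) :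
    a * enorm (SBM.projTop k v *ᵥ x) ≤ enorm (M *ᵥ x) := by
  rw [← sq_le_sq₀ (mul_nonneg ha (enorm_nonneg _)) (enorm_nonneg _), mul_pow,
    (h.projTop k).sq_enorm_mulVec, h.sq_enorm_mulVec, mul_sum]
  refine sum_le_sum fun i _ => ?_
  split_ifs with hi
  · rw [one_pow, one_mul]
    gcongr
    exact hf i hi
  · rw [zero_pow two_ne_zero, zero_mul, mul_zero]
    positivity

lemma enorm_mulVec_le (h : IsEigenbasis M f v) {k : ℕ} {b η : ℝ} (hb : 0 ≤ b) (hη : 0 ≤ η)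
    (htop : ∀ i : Fin n, (i : ℕ) < k → |f i| ≤ b) (htail : ∀ i : Fin n, k ≤ i → |f i| ≤ η)
    (x : Fin n → ℝ) :
    enorm (M *ᵥ x) ≤ b * enorm (SBM.projTop k v *ᵥ x) + enorm x * η := by
  set P := enorm (SBM.projTop k v *ᵥ x) with hP
  have hP0 : 0 ≤ P := enorm_nonneg _
  have hx0 : 0 ≤ enorm x := enorm_nonneg _
  have sq_le : enorm (M *ᵥ x) ^ 2 ≤ b ^ 2 * P ^ 2 + η ^ 2 * enorm x ^ 2 := by
    rw [hP, (h.projTop k).sq_enorm_mulVec, h.sq_enorm_mulVec, sq_enorm, h.dotProduct_self_eq_sum,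
      mul_sum, mul_sum, ← sum_add_distrib]
    refine sum_le_sum fun i _ => ?_
    rw [← mul_assoc, ← add_mul]
    refine mul_le_mul_of_nonneg_right ?_ (sq_nonneg _)
    split_ifs with hi
    · linarith [sq_le_sq.mpr ((htop i hi).trans (le_abs_self b)), sq_nonneg η]
    · linarith [sq_le_sq.mpr ((htail i (not_lt.mp hi)).trans (le_abs_self η))]
  rw [← sq_le_sq₀ (enorm_nonneg _) (by positivity)]
  linarith [mul_nonneg (mul_nonneg hb hP0) (mul_nonneg hx0 hη)]

end IsEigenbasis

lemma exists_mem_ne_zero_forall_dotProduct_eq_zero {ι κ : Type*} [Fintype ι] [Fintype κ]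
    (U : Submodule ℝ (ι → ℝ)) (w : κ → ι → ℝ)
    (hcard : Fintype.card κ < Module.finrank ℝ U) :
    ∃ x ∈ U, x ≠ 0 ∧ ∀ j, w j ⬝ᵥ x = 0 := by
  have ker_ne_bot : LinearMap.ker ((of w).mulVecLin.domRestrict U) ≠ ⊥ :=
    LinearMap.ker_ne_bot_of_finrank_lt (by simpa using hcard)
  obtain ⟨x, hx, hx0⟩ := (Submodule.ne_bot_iff _).mp ker_ne_bot
  exact ⟨x, x.2, by simpa using hx0, congrFun hx⟩

namespace IsSpectralDecomp

variable {n : ℕ} {A : Matrix (Fin n) (Fin n) ℝ} {lam : Fin n → ℝ} {v : Fin n → Fin n → ℝ}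

lemma isEigenbasis (h : IsSpectralDecomp A lam v) : IsEigenbasis A lam v where
  dotProduct_eq := h.2.1
  vecMul_eq i := by
    rw [h.2.2]
    simp [vecMul_sum, vecMul_smul, vecMul_vecMulVec, h.2.1]

lemma quadForm_le (h : IsSpectralDecomp A lam v) {i : Fin n} {x : Fin n → ℝ}
    (hx : ∀ j < i, v j ⬝ᵥ x = 0) : x ⬝ᵥ (A *ᵥ x) ≤ lam i * (x ⬝ᵥ x) := by
  rw [h.isEigenbasis.quadForm_eq_sum, h.isEigenbasis.dotProduct_self_eq_sum, mul_sum]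
  refine sum_le_sum fun j _ => ?_
  obtain hj | hj := lt_or_ge j i
  · simp [hx j hj]
  · exact mul_le_mul_of_nonneg_right (h.1 hj) (sq_nonneg _)

lemma le_quadForm (h : IsSpectralDecomp A lam v) {i : Fin n} {x : Fin n → ℝ}
    (hx : ∀ j > i, v j ⬝ᵥ x = 0) : lam i * (x ⬝ᵥ x) ≤ x ⬝ᵥ (A *ᵥ x) := by
  rw [h.isEigenbasis.quadForm_eq_sum, h.isEigenbasis.dotProduct_self_eq_sum, mul_sum]
  refine sum_le_sum fun j _ => ?_
  obtain hj | hj := lt_or_ge i j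
  · simp [hx j hj]
  · exact mul_le_mul_of_nonneg_right (h.1 hj) (sq_nonneg _)

lemma eigenvalue_le_of_forall_constraint (h : IsSpectralDecomp A lam v) {κ : Type*} [Fintype κ]
    (w : κ → Fin n → ℝ) {i : Fin n} (hcard : Fintype.card κ ≤ i) {c : ℝ}
    (hc : ∀ x, (∀ j, w j ⬝ᵥ x = 0) → x ⬝ᵥ (A *ᵥ x) ≤ c * (x ⬝ᵥ x)) : lam i ≤ c := by
  obtain ⟨x, -, hx0, hx⟩ := exists_mem_ne_zero_forall_dotProduct_eq_zero ⊤
    (Sum.elim w fun j : Ioi i => v j) <| by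
      rw [Fintype.card_sum, Fintype.card_coe, Fin.card_Ioi, finrank_top, Module.finrank_fin_fun]
      omega
  have hle := (h.le_quadForm fun j hj => hx (.inr ⟨j, mem_Ioi.mpr hj⟩)).trans
    (hc x fun j => hx (.inl j))
  exact le_of_mul_le_mul_right hle (by simpa using dotProduct_star_self_pos_iff.mpr hx0)

lemma le_eigenvalue_of_forall_mem (h : IsSpectralDecomp A lam v) {U : Submodule ℝ (Fin n → ℝ)}
    {i : Fin n} (hU : i < Module.finrank ℝ U) {c : ℝ}
    (hc : ∀ x ∈ U, c * (x ⬝ᵥ x) ≤ x ⬝ᵥ (A *ᵥ x)) : c ≤ lam i := by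
  obtain ⟨x, hxU, hx0, hx⟩ := exists_mem_ne_zero_forall_dotProduct_eq_zero U
    (fun j : Iio i => v j) (by rwa [Fintype.card_coe, Fin.card_Iio])
  have hle := (hc x hxU).trans (h.quadForm_le fun j hj => hx ⟨j, mem_Iio.mpr hj⟩)
  exact le_of_mul_le_mul_right hle (by simpa using dotProduct_star_self_pos_iff.mpr hx0)

variable {B E : Matrix (Fin n) (Fin n) ℝ} {lam' : Fin n → ℝ} {v' : Fin n → Fin n → ℝ}

lemma eigenvalue_le_add (hA : IsSpectralDecomp A lam v) (hB : IsSpectralDecomp B lam' v') {ε : ℝ}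
    (hAB : ∀ x, x ⬝ᵥ (B *ᵥ x) ≤ x ⬝ᵥ (A *ᵥ x) + ε * (x ⬝ᵥ x)) (i : Fin n) :
    lam' i ≤ lam i + ε := by
  refine hB.eigenvalue_le_of_forall_constraint (fun j : Iio i => v j)
    (by rw [Fintype.card_coe, Fin.card_Iio]) fun x hx => ?_
  linarith [hAB x, hA.quadForm_le fun j hj => hx ⟨j, mem_Iio.mpr hj⟩]

lemma abs_eigenvalue_sub_le_specNorm (hA : IsSpectralDecomp A lam v)
    (hAE : IsSpectralDecomp (A + E) lam' v') (i : Fin n) : |lam' i - lam i| ≤ specNorm E := by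
  have hE x := abs_le.mp (abs_dotProduct_mulVec_le_specNorm E x)
  have upper := hA.eigenvalue_le_add hAE (ε := specNorm E) (fun x => by
    rw [add_mulVec, dotProduct_add]; linarith [(hE x).2]) i
  have lower := hAE.eigenvalue_le_add hA (ε := specNorm E) (fun x => by
    rw [add_mulVec, dotProduct_add]; linarith [(hE x).1]) i
  exact abs_sub_le_iff.mpr ⟨by linarith, by linarith⟩

end IsSpectralDecomp

section MeanMatrix

variable {n k : ℕ} (cl : Fin n → Fin k)

/-- The indicator vector of the cluster `c`. The mean matrix is a combination of the rank-one
matrices of these vectors and of their sum `1`. -/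
def clusterVec (c : Fin k) : Fin n → ℝ := fun u => if cl u = c then 1 else 0

lemma clusterVec_dotProduct (c : Fin k) (x : Fin n → ℝ) :
    clusterVec cl c ⬝ᵥ x = ∑ u with cl u = c, x u := by
  simp [clusterVec, dotProduct, sum_filter]

lemma sum_clusterVec : ∑ c, clusterVec cl c = 1 := by
  ext u
  simp [clusterVec, Finset.sum_apply]

lemma sum_comp_cluster (f : Fin k → ℝ) : ∑ u, f (cl u) = ∑ c, clusterSize cl c * f c := by
  rw [← sum_fiberwise univ cl]
  refine sum_congr rfl fun c _ => ?_
  rw [clusterSize, ← nsmul_eq_mul, ← sum_const]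
  exact sum_congr rfl fun u hu => by rw [(mem_filter.mp hu).2]

lemma meanMatrix_eq (p q : ℝ) :
    meanMatrix n k p q cl =
      (p - q) • ∑ c, vecMulVec (clusterVec cl c) (clusterVec cl c) + q • vecMulVec 1 1 := by
  ext u w
  by_cases h : cl u = cl w <;>
    simp [meanMatrix, clusterVec, vecMulVec_apply, Matrix.sum_apply, h, eq_comm]

lemma meanMatrix_quadForm (p q : ℝ) (x : Fin n → ℝ) :
    x ⬝ᵥ (meanMatrix n k p q cl *ᵥ x) =
      (p - q) * ∑ c, (clusterVec cl c ⬝ᵥ x) ^ 2 + q * (1 ⬝ᵥ x) ^ 2 := by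
  simp only [meanMatrix_eq, add_mulVec, smul_mulVec, sum_mulVec, vecMulVec_mulVec,
    dotProduct_comm x, add_dotProduct, smul_dotProduct, sum_dotProduct, op_smul_eq_smul,
    smul_eq_mul, sq]

lemma sum_sq_clusterVec_dotProduct_le {s : ℝ} (hs : ∀ c, clusterSize cl c ≤ s) (x : Fin n → ℝ) :
    ∑ c, (clusterVec cl c ⬝ᵥ x) ^ 2 ≤ s * (x ⬝ᵥ x) := by
  calc ∑ c, (clusterVec cl c ⬝ᵥ x) ^ 2
      ≤ ∑ c, s * ∑ u with cl u = c, x u ^ 2 := by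
        refine sum_le_sum fun c _ => ?_
        rw [clusterVec_dotProduct]
        exact sq_sum_le_card_mul_sum_sq.trans <|
          mul_le_mul_of_nonneg_right (hs c) (sum_nonneg fun _ _ => sq_nonneg _)
    _ = s * (x ⬝ᵥ x) := by
        rw [← mul_sum, sum_fiberwise]
        simp only [dotProduct, sq]

lemma le_sum_sq_clusterVec_dotProduct_comp {s : ℝ} (hs : ∀ c, s ≤ clusterSize cl c)
    (a : Fin k → ℝ) :
    s * ((a ∘ cl) ⬝ᵥ (a ∘ cl)) ≤ ∑ c, (clusterVec cl c ⬝ᵥ (a ∘ cl)) ^ 2 := by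
  have hdot : ∀ c, clusterVec cl c ⬝ᵥ (a ∘ cl) = clusterSize cl c * a c := fun c => by
    simpa [clusterVec, dotProduct] using sum_comp_cluster cl fun d => if d = c then a d else 0
  have hself : (a ∘ cl) ⬝ᵥ (a ∘ cl) = ∑ c, clusterSize cl c * (a c * a c) :=
    sum_comp_cluster cl fun c => a c * a c
  rw [hself, mul_sum]
  refine sum_le_sum fun c _ => ?_
  calc s * (clusterSize cl c * (a c * a c))
      ≤ clusterSize cl c * (clusterSize cl c * (a c * a c)) :=
        mul_le_mul_of_nonneg_right (hs c) (mul_nonneg (Nat.cast_nonneg _) (mul_self_nonneg _))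
    _ = (clusterVec cl c ⬝ᵥ (a ∘ cl)) ^ 2 := by rw [hdot]; ring

lemma finrank_range_funLeft_of_clusterSize_pos (hs : ∀ c, 0 < clusterSize cl c) :
    Module.finrank ℝ (LinearMap.range (LinearMap.funLeft ℝ ℝ cl)) = k := by
  have surjective : Function.Surjective cl := fun c => by
    obtain ⟨u, hu⟩ := card_pos.mp (hs c)
    exact ⟨u, (mem_filter.mp hu).2⟩
  rw [LinearMap.finrank_range_of_inj (LinearMap.funLeft_injective_of_surjective _ _ _ surjective),
    Module.finrank_fin_fun]

variable {cl} {p q s : ℝ} {lam : Fin n → ℝ} {v : Fin n → Fin n → ℝ}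

lemma eigenvalue_meanMatrix_nonneg (hq : 0 ≤ q) (hpq : q ≤ p)
    (h : IsSpectralDecomp (meanMatrix n k p q cl) lam v) (i : Fin n) : 0 ≤ lam i := by
  have hlam : v i ⬝ᵥ (meanMatrix n k p q cl *ᵥ v i) = lam i := by
    rw [h.isEigenbasis.dotProduct_mulVec, h.2.1, if_pos rfl, mul_one]
  rw [← hlam, meanMatrix_quadForm]
  have := sub_nonneg.mpr hpq
  positivity

lemma eigenvalue_meanMatrix_eq_zero (hq : 0 ≤ q) (hpq : q ≤ p)
    (h : IsSpectralDecomp (meanMatrix n k p q cl) lam v) {i : Fin n} (hi : k ≤ i) :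
    lam i = 0 := by
  refine le_antisymm ?_ (eigenvalue_meanMatrix_nonneg hq hpq h i)
  refine h.eigenvalue_le_of_forall_constraint (clusterVec cl) (by simpa using hi) fun x hx => ?_
  simp [meanMatrix_quadForm, ← sum_clusterVec cl, sum_dotProduct, hx]

lemma eigenvalue_meanMatrix_le (hpq : q ≤ p) (hs : ∀ c, clusterSize cl c ≤ s)
    (h : IsSpectralDecomp (meanMatrix n k p q cl) lam v) {i : Fin n} (hi : 0 < (i : ℕ)) :
    lam i ≤ (p - q) * s := by
  refine h.eigenvalue_le_of_forall_constraint (fun _ : Unit => 1) (by rwa [Fintype.card_unit])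
    fun x hx => ?_
  rw [meanMatrix_quadForm, hx (), zero_pow two_ne_zero, mul_zero, add_zero, mul_assoc]
  exact mul_le_mul_of_nonneg_left (sum_sq_clusterVec_dotProduct_le cl hs x) (sub_nonneg.mpr hpq)

lemma le_eigenvalue_meanMatrix (hq : 0 ≤ q) (hpq : q ≤ p) (hs0 : 0 < s)
    (hs : ∀ c, s ≤ clusterSize cl c) (h : IsSpectralDecomp (meanMatrix n k p q cl) lam v)
    {i : Fin n} (hi : (i : ℕ) < k) : (p - q) * s ≤ lam i := by
  have finrank_eq := finrank_range_funLeft_of_clusterSize_pos cl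
    fun c => Nat.cast_pos.mp (hs0.trans_le (hs c))
  refine h.le_eigenvalue_of_forall_mem (hi.trans_eq finrank_eq.symm) ?_
  rintro _ ⟨a, rfl⟩
  rw [meanMatrix_quadForm, mul_assoc]
  have := mul_le_mul_of_nonneg_left (le_sum_sq_clusterVec_dotProduct_comp cl hs a)
    (sub_nonneg.mpr hpq)
  exact this.trans (le_add_of_nonneg_right (by positivity))

end MeanMatrix

section Polynomial

variable {l m t η : ℝ}

lemma abs_psiR_sub_one_le (hl : 0 < l) (hm : 0 < m) (h : |t - l| * |t - m| ≤ η * (l * m)) :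
    |psiR l m t - 1| ≤ η := by
  have factor : psiR l m t - 1 = -((t - l) * (t - m)) / (l * m) := by
    unfold psiR; field_simp; ring
  rwa [factor, abs_div, abs_neg, abs_mul, abs_of_pos (mul_pos hl hm), div_le_iff₀ (mul_pos hl hm)]

lemma abs_psiR_le (hl : 0 < l) (hm : 0 < m) (h : |t| * |l + m - t| ≤ η * (l * m)) :
    |psiR l m t| ≤ η := by
  have factor : psiR l m t = t * (l + m - t) / (l * m) := by
    unfold psiR; field_simp; ring
  rwa [factor, abs_div, abs_mul, abs_of_pos (mul_pos hl hm), div_le_iff₀ (mul_pos hl hm)]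

lemma pow_mem_Icc_of_mul_abs_sub_one_le {s : ℝ} {r : ℕ} (h : r * |s - 1| ≤ 1 / 3) :
    s ^ r ∈ Set.Icc (1 / 2) (3 / 2) := by
  obtain rfl | hr := Nat.eq_zero_or_pos r
  · norm_num
  have hr1 : (1 : ℝ) ≤ r := mod_cast hr
  obtain ⟨hlow, -⟩ := abs_le.mp ((le_mul_of_one_le_left (abs_nonneg (s - 1)) hr1).trans h)
  obtain ⟨hrlow, hrup⟩ := abs_le.mp (show |r * (s - 1)| ≤ 1 / 3 by rwa [abs_mul, Nat.abs_cast])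
  constructor
  · have bernoulli := one_add_mul_le_pow (a := s - 1) (by linarith) r
    rw [add_sub_cancel] at bernoulli
    linarith
  · calc s ^ r ≤ Real.exp (s - 1) ^ r := by
          gcongr
          · linarith
          · linarith [Real.add_one_le_exp (s - 1)]
      _ = Real.exp (r * (s - 1)) := (Real.exp_nat_mul _ _).symm
      _ ≤ Real.exp (1 / 3) := Real.exp_le_exp.mpr hrup
      _ ≤ 1 / (1 - 1 / 3) := Real.exp_bound_div_one_sub_of_interval (by norm_num) (by norm_num)
      _ = 3 / 2 := by norm_num

end Polynomial

/-- The shape of the spectrum of the mean matrix of a nearly balanced partition: among the `k`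
leading eigenvalues all but the first, which may be much larger, are within a factor `1 ± δ` of
`mu`, and the others vanish. -/
structure IsClusteredSpectrum {n : ℕ} (lam : Fin n → ℝ) (k : ℕ) (mu δ : ℝ) : Prop where
  antitone : Antitone lam
  lower : ∀ i : Fin n, (i : ℕ) < k → (1 - δ) * mu ≤ lam i
  upper : ∀ i : Fin n, 0 < (i : ℕ) → lam i ≤ (1 + δ) * mu
  eq_zero : ∀ i : Fin n, k ≤ i → lam i = 0

lemma Balanced.isClusteredSpectrum {n k : ℕ} {cl : Fin n → Fin k} (hbal : Balanced n k cl)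
    (hlog : 1 ≤ Real.log n) {p q : ℝ} (hq : 0 ≤ q) (hpq : q ≤ p) {lam : Fin n → ℝ}
    {v : Fin n → Fin n → ℝ} (h : IsSpectralDecomp (meanMatrix n k p q cl) lam v) :
    IsClusteredSpectrum lam k ((p - q) * ((n : ℝ) / k)) ((Real.log n)⁻¹ / 16) := by
  have hδ : 1 / (16 * Real.log n) = (Real.log n)⁻¹ / 16 := by ring
  have hδ1 : (Real.log n)⁻¹ ≤ 1 := inv_le_one_of_one_le₀ hlog
  simp only [Balanced, hδ] at hbal
  refine ⟨h.1, fun i hi => ?_, fun i hi => ?_,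
    fun i hi => eigenvalue_meanMatrix_eq_zero hq hpq h hi⟩
  · have hn0 : (0 : ℝ) < n := Nat.cast_pos.mpr i.pos
    have hk0 : (0 : ℝ) < k := Nat.cast_pos.mpr (by omega)
    rw [mul_left_comm]
    exact le_eigenvalue_meanMatrix hq hpq (mul_pos (by linarith) (div_pos hn0 hk0))
      (fun c => (hbal c).1) h hi
  · rw [mul_left_comm]
    exact eigenvalue_meanMatrix_le hpq (fun c => (hbal c).2) h hi

namespace IsClusteredSpectrum

variable {n k r : ℕ} {lam : Fin n → ℝ} {mu δ t η : ℝ}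

lemma le_first_eigenvalue (h : IsClusteredSpectrum lam k mu (δ / 16)) (hn : 0 < n) (hk : 0 < k)
    (hmu : 0 ≤ mu) (hδ : δ ≤ 1) : 15 / 16 * mu ≤ lam ⟨0, hn⟩ := by
  linarith [h.lower ⟨0, hn⟩ hk, mul_le_of_le_one_left hmu hδ]

/-- If `t` is within `O(δμ)` of one of the roots `λ₁`, `μ` of `ψ - 1`, then its distance to the
other root is `O(λ₁)`, so that `|ψ(t) - 1| = |t - λ₁| |t - μ| / (λ₁μ)` is `O(δ)`. -/
lemma abs_psiR_sub_one_le (h : IsClusteredSpectrum lam k mu (δ / 16)) (hn : 0 < n)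
    (hmu : 0 < mu) (hδ : δ ≤ 1) {i : Fin n} (hi : (i : ℕ) < k)
    (ht : |t - lam i| ≤ δ / 100 * mu) : |psiR (lam ⟨0, hn⟩) mu t - 1| ≤ δ / 8 := by
  have hl := h.le_first_eigenvalue hn (by omega) hmu.le hδ
  have hi_le : lam i ≤ lam ⟨0, hn⟩ := h.antitone (Nat.zero_le _)
  have hδmu : δ * mu ≤ mu := mul_le_of_le_one_left hmu.le hδ
  have hδ0 : 0 ≤ δ * mu := by linarith [abs_nonneg (t - lam i)]
  have hδl : 0 ≤ δ * mu * lam ⟨0, hn⟩ := mul_nonneg hδ0 (by linarith)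
  obtain ⟨ht_low, ht_up⟩ := abs_le.mp ht
  refine SBM.abs_psiR_sub_one_le (by linarith) hmu ?_
  obtain rfl | hi0 : i = ⟨0, hn⟩ ∨ 0 < (i : ℕ) := by
    rw [Fin.ext_iff]; exact Nat.eq_zero_or_pos _
  · have hright : |t - mu| ≤ 2 * lam ⟨0, hn⟩ := abs_le.mpr ⟨by linarith, by linarith⟩
    linarith [mul_le_mul ht hright (abs_nonneg _) (by linarith)]
  · have hlow := h.lower i hi
    have hup := h.upper i hi0
    have hleft : |t - lam ⟨0, hn⟩| ≤ lam ⟨0, hn⟩ := abs_le.mpr ⟨by linarith, by linarith⟩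
    have hright : |t - mu| ≤ δ / 8 * mu := abs_le.mpr ⟨by linarith, by linarith⟩
    linarith [mul_le_mul hleft hright (abs_nonneg _) (by linarith)]

lemma abs_psiR_le (h : IsClusteredSpectrum lam k mu (δ / 16)) (hn : 0 < n) (hk : 0 < k)
    (hmu : 0 < mu) (hδ : δ ≤ 1) (ht : |t| ≤ δ / 100 * mu) :
    |psiR (lam ⟨0, hn⟩) mu t| ≤ δ := by
  have hl := h.le_first_eigenvalue hn hk hmu.le hδ
  have hδmu : δ * mu ≤ mu := mul_le_of_le_one_left hmu.le hδ
  have hδ0 : 0 ≤ δ * mu := by linarith [abs_nonneg t]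
  obtain ⟨ht_low, ht_up⟩ := abs_le.mp ht
  have hright : |lam ⟨0, hn⟩ + mu - t| ≤ 3 * lam ⟨0, hn⟩ :=
    abs_le.mpr ⟨by linarith, by linarith⟩
  refine SBM.abs_psiR_le (by linarith) hmu ?_
  have hδl : 0 ≤ δ * mu * lam ⟨0, hn⟩ := mul_nonneg hδ0 (by linarith)
  linarith [mul_le_mul ht hright (abs_nonneg _) (by linarith)]

lemma abs_phiR_le (h : IsClusteredSpectrum lam k mu (δ / 16)) (hn : 0 < n) (hk : 0 < k)
    (hmu : 0 < mu) (hδ : δ ≤ 1) (ht : |t| ≤ δ / 100 * mu) :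
    |phiR (lam ⟨0, hn⟩) mu r t| ≤ δ ^ r := by
  rw [phiR, abs_pow]
  exact pow_le_pow_left₀ (abs_nonneg _) (h.abs_psiR_le hn hk hmu hδ ht) r

variable {M : Matrix (Fin n) (Fin n) ℝ} {f : Fin n → ℝ} {v : Fin n → Fin n → ℝ}

lemma enorm_phiM_mulVec_bounds (h : IsClusteredSpectrum lam k mu (δ / 16)) (hn : 0 < n)
    (hmu : 0 < mu) (hδ : δ ≤ 1) (hr : r * δ ≤ 2) (hM : IsEigenbasis M f v)
    (hf : ∀ i, |f i - lam i| ≤ δ / 100 * mu) (hη : 0 ≤ η)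
    (htail : ∀ i : Fin n, k ≤ i → |phiR (lam ⟨0, hn⟩) mu r (f i)| ≤ η) (x : Fin n → ℝ) :
    1 / 2 * enorm (projTop k v *ᵥ x) ≤ enorm (phiM (lam ⟨0, hn⟩) mu r M *ᵥ x) ∧
      enorm (phiM (lam ⟨0, hn⟩) mu r M *ᵥ x) ≤
        3 / 2 * enorm (projTop k v *ᵥ x) + enorm x * η := by
  have htop : ∀ i : Fin n, (i : ℕ) < k →
      phiR (lam ⟨0, hn⟩) mu r (f i) ∈ Set.Icc (1 / 2) (3 / 2) := fun i hi => by
    refine pow_mem_Icc_of_mul_abs_sub_one_le ?_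
    have := mul_le_mul_of_nonneg_left (h.abs_psiR_sub_one_le hn hmu hδ hi (hf i)) r.cast_nonneg
    linarith
  have hphi := hM.phiM (lam ⟨0, hn⟩) mu r
  refine ⟨hphi.mul_enorm_projTop_le (by norm_num) (fun i hi => (htop i hi).1) x,
    hphi.enorm_mulVec_le (by norm_num) hη (fun i hi => ?_) htail x⟩
  exact abs_le.mpr ⟨by linarith [(htop i hi).1], (htop i hi).2⟩

end IsClusteredSpectrum

lemma inv_log_pow_le_rpow {x : ℝ} (hx : 0 < x) (hlog : 1 ≤ Real.log x) {r : ℕ}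
    (hr : Real.log x ≤ r) : (Real.log x)⁻¹ ^ r ≤ x ^ (-Real.log (Real.log x)) := by
  have hlog0 : 0 < Real.log x := one_pos.trans_le hlog
  calc (Real.log x)⁻¹ ^ r = (Real.log x)⁻¹ ^ (r : ℝ) := (Real.rpow_natCast _ _).symm
    _ ≤ (Real.log x)⁻¹ ^ Real.log x :=
        Real.rpow_le_rpow_of_exponent_ge (inv_pos.mpr hlog0) (inv_le_one_of_one_le₀ hlog) hr
    _ = x ^ (-Real.log (Real.log x)) := by
        rw [Real.rpow_def_of_pos (inv_pos.mpr hlog0), Real.rpow_def_of_pos hx, Real.log_inv,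
          mul_comm]

lemma one_le_log_natCast {n : ℕ} (hn : 3 ≤ n) : 1 ≤ Real.log n := by
  have hn3 : (3 : ℝ) ≤ n := mod_cast hn
  rw [Real.le_log_iff_exp_le (by linarith)]
  exact Real.exp_one_lt_three.le.trans hn3

theorem _root_.poly_approximates_projection_general {n k r : ℕ} (hn : 3 ≤ n)
    (hr : Real.log n ≤ r) (hr2 : r ≤ 2 * Real.log n) {p q : ℝ} (hq : 0 ≤ q) (hpq : q < p)
    {cl : Fin n → Fin k} (hbal : Balanced n k cl) {E : Matrix (Fin n) (Fin n) ℝ}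
    (hE : specNorm E ≤ (p - q) * ((n : ℝ) / k) / (100 * Real.log n))
    {lamG : Fin n → ℝ} {vG : Fin n → Fin n → ℝ}
    (hG : IsSpectralDecomp (meanMatrix n k p q cl) lamG vG)
    {lamH : Fin n → ℝ} {vH : Fin n → Fin n → ℝ}
    (hH : IsSpectralDecomp (meanMatrix n k p q cl + E) lamH vH) (x : Fin n → ℝ) :
    let φ := phiM (lamG ⟨0, by omega⟩) ((p - q) * ((n : ℝ) / k)) r
    let G := meanMatrix n k p q cl
    1 / 2 * enorm (projTop k vH *ᵥ x) ≤ enorm (φ (G + E) *ᵥ x) ∧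
      enorm (φ (G + E) *ᵥ x) ≤
        3 / 2 * enorm (projTop k vH *ᵥ x) + enorm x * (n : ℝ) ^ (-Real.log (Real.log n)) ∧
      1 / 2 * enorm (projTop k vG *ᵥ x) ≤ enorm (φ G *ᵥ x) ∧
      enorm (φ G *ᵥ x) ≤ 3 / 2 * enorm (projTop k vG *ᵥ x) := by
  intro φ G
  have hn0 : 0 < n := by omega
  have hk0 : 0 < k := (cl ⟨0, hn0⟩).pos
  have hlog := one_le_log_natCast hn
  have hmu : 0 < (p - q) * ((n : ℝ) / k) := mul_pos (sub_pos.mpr hpq) (by positivity)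
  have hδ1 : (Real.log n)⁻¹ ≤ 1 := inv_le_one_of_one_le₀ hlog
  have hrδ : r * (Real.log n)⁻¹ ≤ 2 := by rwa [← div_eq_mul_inv, div_le_iff₀ (by linarith)]
  have hspec := hbal.isClusteredSpectrum hlog hq hpq.le hG
  have hclose : ∀ i, |lamH i - lamG i| ≤ (Real.log n)⁻¹ / 100 * ((p - q) * ((n : ℝ) / k)) :=
    fun i => (hG.abs_eigenvalue_sub_le_specNorm hH i).trans (hE.trans_eq (by ring))
  have hr0 : r ≠ 0 := (Nat.cast_pos.mp (one_pos.trans_le (hlog.trans hr))).ne'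
  obtain ⟨hlowH, hupH⟩ := hspec.enorm_phiM_mulVec_bounds hn0 hmu hδ1 hrδ hH.isEigenbasis hclose
    (by positivity) (fun i hi => (hspec.abs_phiR_le hn0 hk0 hmu hδ1
      (by simpa only [hspec.eq_zero i hi, sub_zero] using hclose i)).trans
        (inv_log_pow_le_rpow (by positivity) hlog hr)) x
  obtain ⟨hlowG, hupG⟩ := hspec.enorm_phiM_mulVec_bounds (η := 0) hn0 hmu hδ1 hrδ hG.isEigenbasis
    (fun i => by rw [sub_self, abs_zero]; positivity) le_rfl
    (fun i hi => by simp [hspec.eq_zero i hi, phiR, psiR, hr0]) x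
  exact ⟨hlowH, hupH, hlowG, by simpa using hupG⟩

end SBM

open SBM in
/-- Polynomial approximation of the projections. Suppose `n ≥ 3`, `k ≥ 2`,
the partition is balanced, `E` is symmetric with `‖E‖₂ ≤ μ/(100 log n)` and `Ĝ = G + E`.
Then for every `x`:
`(1/2)‖P_{Ĝ_k}x‖ ≤ ‖φ(Ĝ)x‖ ≤ (3/2)‖P_{Ĝ_k}x‖ + ‖x‖·n^{−log log n}` and
`(1/2)‖P_{G_k}x‖ ≤ ‖φ(G)x‖ ≤ (3/2)‖P_{G_k}x‖`. -/
theorem poly_approximates_projection (n k : ℕ) (hn : 3 ≤ n) (hk : 2 ≤ k)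
    (p q : ℝ) (hq : 0 ≤ q) (hpq : q < p) (hp : p ≤ 1)
    (cl : Fin n → Fin k) (hbal : Balanced n k cl)
    (E : Matrix (Fin n) (Fin n) ℝ) (hE : E.IsSymm)
    (hEnorm : specNorm E ≤ (p - q) * ((n : ℝ) / k) / (100 * Real.log n))
    (lamG : Fin n → ℝ) (vG : Fin n → Fin n → ℝ)
    (hdecG : IsSpectralDecomp (meanMatrix n k p q cl) lamG vG)
    (lamH : Fin n → ℝ) (vH : Fin n → Fin n → ℝ)
    (hdecH : IsSpectralDecomp (meanMatrix n k p q cl + E) lamH vH) :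
    ∀ x : Fin n → ℝ,
      (1 / 2) * SBM.enorm ((projTop k vH).mulVec x) ≤
          SBM.enorm ((phiM (lamG ⟨0, by omega⟩) ((p - q) * ((n : ℝ) / k)) ⌈Real.log n⌉₊
            (meanMatrix n k p q cl + E)).mulVec x) ∧
      SBM.enorm ((phiM (lamG ⟨0, by omega⟩) ((p - q) * ((n : ℝ) / k)) ⌈Real.log n⌉₊
            (meanMatrix n k p q cl + E)).mulVec x) ≤
          (3 / 2) * SBM.enorm ((projTop k vH).mulVec x) +
            SBM.enorm x * (n : ℝ) ^ (-Real.log (Real.log n)) ∧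
      (1 / 2) * SBM.enorm ((projTop k vG).mulVec x) ≤
          SBM.enorm ((phiM (lamG ⟨0, by omega⟩) ((p - q) * ((n : ℝ) / k)) ⌈Real.log n⌉₊
            (meanMatrix n k p q cl)).mulVec x) ∧
      SBM.enorm ((phiM (lamG ⟨0, by omega⟩) ((p - q) * ((n : ℝ) / k)) ⌈Real.log n⌉₊
            (meanMatrix n k p q cl)).mulVec x) ≤
          (3 / 2) * SBM.enorm ((projTop k vG).mulVec x) := by
  exact poly_approximates_projection_general hn (Nat.le_ceil _)
    (Nat.ceil_le_two_mul (by linarith [one_le_log_natCast hn])) hq hpq hbal hEnorm hdecG hdecH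
end

section
/- There exist constants C, c > 0 such that the following holds. If the partition is balanced, k ≥ 2, and n ≥ C·k²·p·(log n)¹²/(p−q)², then for every vertex u ∈ V, with probability at least 1 − c·n^{−2} over the choice of E, ‖(φ(Ĝ) − φ(G))·E_u‖ ≤ 7·10⁶·(√(kp)·(log n)² + 1/log n). -/
open MeasureTheory ProbabilityTheory Matrix Finset

namespace SBM

/-- The SSBM noise model: `E` is a random symmetric matrix whose upper-triangular entries
are independent, with `E_{uv} = 1 − G_{uv}` with probability `G_{uv}` and
`E_{uv} = −G_{uv}` with probability `1 − G_{uv}`, where `G` is the mean matrix. -/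
def NoiseModel {Ω : Type*} [MeasureSpace Ω] {n k : ℕ} (p q : ℝ) (cl : Fin n → Fin k)
    (E : Ω → Matrix (Fin n) (Fin n) ℝ) : Prop :=
  (∀ ω, (E ω).IsSymm) ∧
  (∀ u v : Fin n, Measurable fun ω => E ω u v) ∧
  iIndepFun (m := fun _ : {e : Fin n × Fin n // e.1 ≤ e.2} => (inferInstance : MeasurableSpace ℝ))
    (fun e ω => E ω e.1.1 e.1.2) ℙ ∧
  (∀ u v : Fin n, u ≤ v →
    Measure.map (fun ω => E ω u v) ℙ =
      ENNReal.ofReal (meanMatrix n k p q cl u v) •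
        Measure.dirac (1 - meanMatrix n k p q cl u v) +
      ENNReal.ofReal (1 - meanMatrix n k p q cl u v) •
        Measure.dirac (-(meanMatrix n k p q cl u v)))

end SBM

/-!
Let `P` average over the clusters, so that `G = G P`. Every term of
`ψ(G + E) - ψ(E) = ψ(G) - (G E + E G) / (λ₁ μ)` contains a factor `G`, so it acts on `x` only
through `P x` and `P E x`. Since `‖ψ(G)‖ ≤ 1 + 1 / (16 log n)` and `‖E‖` is far below `μ`,
telescoping reduces `ψ(G + E) ^ r - ψ(E) ^ r`, applied to `E_u`, to the vectors `P E ^ m E_u`, and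
`ψ(E) ^ r` itself is negligible.

The coordinates of `P E ^ m E_u` are averages of `E ^ m E_u` over clusters, that is, multiples of
`(E ^ (m + 1) 1_A) u` for clusters `A`. Cutting a walk from `v` at its last visit to `u` leaves a
step out of `u` followed by a walk that avoids `u`, and the latter is independent of the row of `u`.
So Bernstein's inequality and a union bound control the weights of the final parts, and induction
on the length of the walks turns this into bounds on the powers of `E`.
-/

namespace SBM

section Walks

variable {V R : Type*} [Fintype V] [DecidableEq V] [CommSemiring R]

/-- `avoiding E u x j` has at `v` the total `E`-weight of the walks of length `j` from `v` none of
whose vertices is `u`, a walk ending at `w` being weighted by `x w` in addition. -/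
def avoiding (E : Matrix V V R) (u : V) (x : V → R) : ℕ → V → R
  | 0 => Function.update x u 0
  | j + 1 => Function.update (E *ᵥ avoiding E u x j) u 0

/-- The total `E`-weight of the walks of length `j` that start at `u` and never return to `u`, a
walk ending at `w` being weighted by `x w` in addition. -/
def escape (E : Matrix V V R) (u : V) (x : V → R) : ℕ → R
  | 0 => x u
  | j + 1 => (E *ᵥ avoiding E u x j) u

lemma avoiding_self (E : Matrix V V R) (u : V) (x : V → R) (j : ℕ) : avoiding E u x j u = 0 := by
  cases j <;> simp [avoiding]

lemma avoiding_congr {M N : Matrix V V R} {u : V} (h : ∀ v w, v ≠ u → w ≠ u → M v w = N v w)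
    (x : V → R) (j : ℕ) : avoiding M u x j = avoiding N u x j := by
  induction j with
  | zero => rfl
  | succ j ih =>
    ext v
    by_cases hv : v = u
    · rw [hv, avoiding_self, avoiding_self]
    · simp only [avoiding, Function.update_of_ne hv, mulVec, dotProduct, ← ih]
      refine Finset.sum_congr rfl fun w _ => ?_
      by_cases hw : w = u
      · rw [hw, avoiding_self, mul_zero, mul_zero]
      · rw [h v w hv hw]

lemma eq_avoiding_zero_add (E : Matrix V V R) (u : V) (x : V → R) :
    x = avoiding E u x 0 + escape E u x 0 • Pi.single u 1 := by
  ext v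
  by_cases h : v = u
  · subst h; simp [avoiding, escape]
  · simp [avoiding, h]

lemma mulVec_avoiding (E : Matrix V V R) (u : V) (x : V → R) (j : ℕ) :
    E *ᵥ avoiding E u x j = avoiding E u x (j + 1) + escape E u x (j + 1) • Pi.single u 1 := by
  ext v
  by_cases h : v = u
  · subst h; simp [avoiding, escape]
  · simp [avoiding, h]

-- Walks are sorted by the time `m` of their last visit to `u`.
lemma pow_mulVec_eq_avoiding_add_sum_escape (E : Matrix V V R) (u : V) (x : V → R) (j : ℕ) :
    E ^ j *ᵥ x = avoiding E u x j + ∑ m ∈ range (j + 1), escape E u x (j - m) • (E ^ m).col u := by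
  simp only [← mulVec_single_one]
  induction j with
  | zero =>
    simpa only [pow_zero, one_mulVec, zero_add, sum_range_one, Nat.sub_zero] using
      eq_avoiding_zero_add E u x
  | succ j ih =>
    have shift : E *ᵥ ∑ m ∈ range (j + 1), escape E u x (j - m) • (E ^ m *ᵥ Pi.single u 1) =
        ∑ m ∈ range (j + 1), escape E u x (j + 1 - (m + 1)) • (E ^ (m + 1) *ᵥ Pi.single u 1) := by
      simp only [mulVec_sum, mulVec_smul, mulVec_mulVec, pow_succ', Nat.add_sub_add_right]
    rw [pow_succ', ← mulVec_mulVec, ih, mulVec_add, mulVec_avoiding, shift,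
      Finset.sum_range_succ' _ (j + 1), add_assoc, add_comm (escape E u x (j + 1) • Pi.single u 1),
      pow_zero, one_mulVec, Nat.sub_zero]

lemma pow_succ_mulVec_apply (E : Matrix V V R) (u v : V) (x : V → R) (j : ℕ) :
    (E ^ (j + 1) *ᵥ x) v = avoiding E u x (j + 1) v + (if v = u then escape E u x (j + 1) else 0) +
      ∑ m ∈ range j, escape E u x (j - m) * (E ^ (m + 1)) v u + x u * (E ^ (j + 1)) v u := by
  rw [pow_mulVec_eq_avoiding_add_sum_escape E u x (j + 1), Finset.sum_range_succ,
    Finset.sum_range_succ']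
  simp only [Pi.add_apply, Finset.sum_apply, Pi.smul_apply, smul_eq_mul, Matrix.col_apply,
    Nat.add_sub_add_right, Nat.sub_zero, pow_zero, Nat.sub_self, Matrix.one_apply, mul_ite, mul_one,
    mul_zero]
  rw [show escape E u x 0 = x u from rfl]
  split_ifs <;> ring

end Walks

section WalkBounds

variable {V : Type*} [Fintype V] [DecidableEq V] {E : Matrix V V ℝ} {x : V → ℝ} {κ τ b β : ℝ}
  {j : ℕ}

/-- The entries of `E ^ (m + 1)` are at most `τ * β ^ m`, up to a factor `b` on the diagonal. -/
def PowEntryBound (E : Matrix V V ℝ) (τ b β : ℝ) (m : ℕ) : Prop :=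
  ∀ u v, |(E ^ (m + 1)) v u| ≤ τ * (if v = u then b else 1) * β ^ m

/-- The escape weights of length `m + 1` are at most `κ * β ^ m`. -/
def EscapeBound (E : Matrix V V ℝ) (x : V → ℝ) (κ β : ℝ) (m : ℕ) : Prop :=
  ∀ u, |escape E u x (m + 1)| ≤ κ * β ^ m

lemma PowEntryBound.le_mul (hτ : 0 ≤ τ) (hb : 1 ≤ b) (hβ : 0 ≤ β) (h : PowEntryBound E τ b β j)
    (u v : V) : |(E ^ (j + 1)) v u| ≤ τ * b * β ^ j := by
  refine (h u v).trans ?_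
  gcongr
  split_ifs <;> linarith

lemma abs_sum_escape_mul_pow_le (hκ : 0 ≤ κ) (hτ : 0 ≤ τ) (hb : 1 ≤ b) (hβ : j * τ * b ≤ β)
    (hE : ∀ m < j, PowEntryBound E τ b β m) (hx : ∀ m < j, EscapeBound E x κ β m) (u v : V) :
    |∑ m ∈ range j, escape E u x (j - m) * (E ^ (m + 1)) v u| ≤ κ * β ^ j := by
  have hβ0 : 0 ≤ β := le_trans (by positivity) hβ
  rcases j with _ | j
  · simpa using hκ
  have hterm : ∀ m ∈ range (j + 1), |escape E u x (j + 1 - m) * (E ^ (m + 1)) v u| ≤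
      κ * (τ * b) * β ^ j := by
    intro m hm
    rw [Finset.mem_range] at hm
    rw [abs_mul, show j + 1 - m = j - m + 1 by omega]
    calc |escape E u x (j - m + 1)| * |(E ^ (m + 1)) v u|
        ≤ κ * β ^ (j - m) * (τ * b * β ^ m) := by
          gcongr
          exacts [hx (j - m) (by omega) u, (hE m hm).le_mul hτ hb hβ0 u v]
      _ = κ * (τ * b) * β ^ (j - m + m) := by ring
      _ = κ * (τ * b) * β ^ j := by rw [Nat.sub_add_cancel (by omega)]
  calc |∑ m ∈ range (j + 1), escape E u x (j + 1 - m) * (E ^ (m + 1)) v u|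
      ≤ ∑ _m ∈ range (j + 1), κ * (τ * b) * β ^ j :=
        (Finset.abs_sum_le_sum_abs _ _).trans (Finset.sum_le_sum hterm)
    _ = κ * ((j + 1 : ℕ) * τ * b) * β ^ j := by simp; ring
    _ ≤ κ * β * β ^ j := by gcongr
    _ = κ * β ^ (j + 1) := by ring

lemma abs_pow_succ_mulVec_apply_le (hκ : 0 ≤ κ) (hτ : 0 ≤ τ) (hb : 1 ≤ b) (hβ : j * τ * b ≤ β)
    (hE : ∀ m < j, PowEntryBound E τ b β m) (hx : ∀ m ≤ j, EscapeBound E x κ β m) (u : V) :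
    |(E ^ (j + 1) *ᵥ x) u| ≤ 2 * κ * β ^ j + |x u| * |(E ^ (j + 1)) u u| := by
  have hmid := abs_sum_escape_mul_pow_le hκ hτ hb hβ hE (fun m hm => hx m hm.le) u u
  have hesc := hx j le_rfl u
  rw [pow_succ_mulVec_apply E u u x j, avoiding_self, if_pos rfl, zero_add, ← abs_mul]
  exact (abs_add_le _ _).trans (add_le_add_left ((abs_add_le _ _).trans (by linarith)) _)

lemma abs_avoiding_succ_le (hκ : 0 ≤ κ) (hτ : 0 ≤ τ) (hb : 1 ≤ b) (hβ : j * τ * b ≤ β)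
    (hE : ∀ m ≤ j, PowEntryBound E τ b β m) (hx : ∀ m ≤ j, EscapeBound E x κ β m) (u v : V) :
    |avoiding E u x (j + 1) v| ≤ (3 * κ + |x v| * (τ * b) + |x u| * τ) * β ^ j := by
  have hβ0 : 0 ≤ β := le_trans (by positivity) hβ
  by_cases h : v = u
  · subst h; rw [avoiding_self, abs_zero]; positivity
  have hlast := pow_succ_mulVec_apply E u v x j
  rw [if_neg h, add_zero] at hlast
  have hsplit : avoiding E u x (j + 1) v = (E ^ (j + 1) *ᵥ x) v -
      ∑ m ∈ range j, escape E u x (j - m) * (E ^ (m + 1)) v u - x u * (E ^ (j + 1)) v u := by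
    rw [hlast]; ring
  have hpow : |(E ^ (j + 1) *ᵥ x) v| ≤ 2 * κ * β ^ j + |x v| * (τ * b * β ^ j) := by
    refine (abs_pow_succ_mulVec_apply_le hκ hτ hb hβ (fun m hm => hE m hm.le) hx v).trans ?_
    gcongr
    exact (hE j le_rfl).le_mul hτ hb hβ0 v v
  have hmid := abs_sum_escape_mul_pow_le hκ hτ hb hβ (fun m hm => hE m hm.le)
    (fun m hm => hx m hm.le) u v
  have hend : |x u * (E ^ (j + 1)) v u| ≤ |x u| * (τ * β ^ j) := by
    rw [abs_mul]
    gcongr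
    simpa [h] using hE j le_rfl u v
  rw [hsplit]
  refine (abs_sub _ _).trans ((add_le_add_left (abs_sub _ _) _).trans ?_)
  linarith

lemma abs_pow_add_two_diag_le (hτ : 0 ≤ τ) (hb : 1 ≤ b) (hβ : 5 * b ≤ β)
    (hrow : ∀ u, ∑ v, |E u v| ≤ 4 * b ^ 2) (hdiag : ∀ u, |E u u| ≤ 1)
    (hE : PowEntryBound E τ b β j) (u : V) : |(E ^ (j + 2)) u u| ≤ τ * b * β ^ (j + 1) := by
  have hβ0 : 0 ≤ β := le_trans (by positivity) hβ
  have hterm : ∀ v, |E u v * (E ^ (j + 1)) v u| ≤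
      |E u v| * (τ * β ^ j) + if v = u then τ * b * β ^ j else 0 := by
    intro v
    rw [abs_mul]
    have hvu := hE u v
    split_ifs at hvu ⊢ with h
    · have : |E u v| * |(E ^ (j + 1)) v u| ≤ 1 * (τ * b * β ^ j) := by
        gcongr
        exact h ▸ hdiag u
      have : 0 ≤ |E u v| * (τ * β ^ j) := by positivity
      linarith
    · rw [add_zero]
      gcongr
      linarith
  rw [show j + 2 = (j + 1) + 1 from rfl, pow_succ' E, Matrix.mul_apply]
  calc _ ≤ ∑ v, |E u v * (E ^ (j + 1)) v u| := Finset.abs_sum_le_sum_abs _ _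
    _ ≤ ∑ v, (|E u v| * (τ * β ^ j) + if v = u then τ * b * β ^ j else 0) :=
        Finset.sum_le_sum fun v _ => hterm v
    _ = (∑ v, |E u v|) * (τ * β ^ j) + τ * b * β ^ j := by
        rw [Finset.sum_add_distrib, ← Finset.sum_mul]; simp
    _ ≤ 4 * b ^ 2 * (τ * β ^ j) + b * (τ * b * β ^ j) := by
        have hτβ : 0 ≤ τ * β ^ j := by positivity
        exact add_le_add (mul_le_mul_of_nonneg_right (hrow u) hτβ)
          (le_mul_of_one_le_left (by positivity) hb)
    _ = 5 * b * (τ * b * β ^ j) := by ring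
    _ ≤ β * (τ * b * β ^ j) := by gcongr
    _ = _ := by ring

end WalkBounds

section CharVec

variable {V : Type*}

/-- The scale of fluctuation of `∑ v ∈ A, E u v` for centred entries of variance at most `p`: the
standard deviation `√(|A| p)`, but at least `1`, the bound on a single entry. -/
noncomputable def setScale (p : ℝ) (A : Finset V) : ℝ := max 1 √(#A * p)

lemma one_le_setScale (p : ℝ) (A : Finset V) : 1 ≤ setScale p A := le_max_left _ _

lemma card_mul_le_setScale_sq {p : ℝ} (hp : 0 ≤ p) (A : Finset V) : #A * p ≤ setScale p A ^ 2 := by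
  rw [← Real.sq_sqrt (by positivity : 0 ≤ #A * p)]
  gcongr
  exact le_max_right _ _

lemma setScale_singleton {p : ℝ} (hp : p ≤ 1) (u : V) : setScale p {u} = 1 := by
  simpa [setScale] using hp

variable [DecidableEq V]

/-- The characteristic vector of a vertex set. -/
def charVec (A : Finset V) : V → ℝ := fun v => if v ∈ A then 1 else 0

lemma charVec_nonneg (A : Finset V) (v : V) : 0 ≤ charVec A v := by
  unfold charVec; split_ifs <;> simp

lemma charVec_le_one (A : Finset V) (v : V) : charVec A v ≤ 1 := by
  unfold charVec; split_ifs <;> simp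

lemma charVec_singleton (u : V) : charVec {u} = Pi.single u 1 := by
  ext; simp [charVec, Pi.single_apply]

variable [Fintype V]

lemma charVec_univ : charVec (univ : Finset V) = 1 := by
  ext; simp [charVec]

lemma charVec_dotProduct (A : Finset V) (y : V → ℝ) : charVec A ⬝ᵥ y = ∑ v ∈ A, y v := by
  simp [charVec, dotProduct, Finset.sum_ite_mem]

lemma mul_sum_charVec_sq_le {p : ℝ} (hp : 0 ≤ p) (A : Finset V) :
    p * ∑ v, charVec A v ^ 2 ≤ setScale p A ^ 2 := by
  refine le_trans (le_of_eq ?_) (card_mul_le_setScale_sq hp A)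
  simp [charVec, Finset.sum_ite_mem, mul_comm]

end CharVec

section WalkRegime

/-- The relations between the parameters under which concentration propagates along walks: `b` is
the standard deviation of a row sum, and `β` is the growth rate of the entries of the powers. -/
structure WalkRegime (V : Type*) [Fintype V] (p L b β : ℝ) (J : ℕ) : Prop where
  p_nonneg : 0 ≤ p
  p_le_one : p ≤ 1
  one_le_L : 1 ≤ L
  ten_mul_L_le : 10 * L ≤ b
  sq_b : b ^ 2 = Fintype.card V * p
  length_mul_le : J * (32 * L) * b ≤ β
  bernstein_le : 64 * L * b ≤ β

namespace WalkRegime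

variable {V : Type*} [Fintype V] {p L b β : ℝ} {J j : ℕ}

lemma one_le_b (h : WalkRegime V p L b β J) : 1 ≤ b := by
  linarith [h.one_le_L, h.ten_mul_L_le]

lemma β_nonneg (h : WalkRegime V p L b β J) : 0 ≤ β := by
  have hL := h.one_le_L
  have hb := h.one_le_b
  exact le_trans (by positivity) h.bernstein_le

lemma mono (h : WalkRegime V p L b β J) (hj : j ≤ J) : WalkRegime V p L b β j where
  __ := h
  length_mul_le := by
    have hL := h.one_le_L
    have hb := h.one_le_b
    refine le_trans ?_ h.length_mul_le
    gcongr

lemma abs_entry_le_one (h : WalkRegime V p L b β J) {E : Matrix V V ℝ}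
    (hE : ∀ u v, E u v ∈ Set.Icc (-p) 1) (u v : V) : |E u v| ≤ 1 :=
  abs_le.2 ⟨by linarith [(hE u v).1, h.p_le_one], (hE u v).2⟩

end WalkRegime

end WalkRegime

section Concentration

variable {V : Type*} [Fintype V] [DecidableEq V] {E : Matrix V V ℝ} {p L b β : ℝ} {J j : ℕ}

/-- The conclusion of Bernstein's inequality for the inner product of the row of `u` with a vector
independent of it, namely `avoiding E u x j`: if the summands are at most `S` and the variance is
at most `L * S ^ 2`, then the sum is at most `8 * L * S`. -/
def BernsteinEvent (E : Matrix V V ℝ) (u : V) (x : V → ℝ) (p L S : ℝ) (j : ℕ) : Prop :=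
  (∀ v, |avoiding E u x j v| ≤ S) → p * ∑ v, avoiding E u x j v ^ 2 ≤ L * S ^ 2 →
    |escape E u x (j + 1)| ≤ 8 * L * S

/-- The scale on which the Bernstein bound is applied to walks of length `j` that end in a vertex
set of scale `σ`. -/
def walkScale (L b β σ : ℝ) : ℕ → ℝ
  | 0 => σ
  | j + 1 => 128 * L * σ * b * β ^ j

lemma walkScale_pos {σ : ℝ} (hL : 0 < L) (hb : 0 < b) (hβ : 0 < β) (hσ : 0 < σ) (j : ℕ) :
    0 < walkScale L b β σ j := by
  cases j <;> unfold walkScale <;> positivity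

/-- The Bernstein bounds hold for all walks of length at most `J` that end in a set of the family
`𝒜`. -/
def IsConcentrated (E : Matrix V V ℝ) (p L b β : ℝ) (J : ℕ) (𝒜 : Finset (Finset V)) : Prop :=
  ∀ A ∈ 𝒜, ∀ j ≤ J, ∀ u, BernsteinEvent E u (charVec A) p L (walkScale L b β (setScale p A) j) j

namespace WalkRegime

lemma abs_avoiding_charVec_succ_le (h : WalkRegime V p L b β j) (A : Finset V)
    (hE : ∀ m ≤ j, PowEntryBound E (32 * L) b β m)
    (hA : ∀ m ≤ j, EscapeBound E (charVec A) (16 * L * setScale p A) β m) (u v : V) :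
    |avoiding E u (charVec A) (j + 1) v| ≤
      32 * L * (5 / 2 * setScale p A + b * charVec A v) * β ^ j := by
  have hL := h.one_le_L
  have hσ := one_le_setScale p A
  have hβ := h.β_nonneg
  refine (abs_avoiding_succ_le (by positivity) (by positivity) h.one_le_b h.length_mul_le hE hA
    u v).trans ?_
  gcongr
  rw [abs_of_nonneg (charVec_nonneg A v), abs_of_nonneg (charVec_nonneg A u)]
  have : charVec A u * (32 * L) ≤ setScale p A * (32 * L) := by
    gcongr
    exact (charVec_le_one A u).trans hσ
  linarith

lemma abs_avoiding_charVec_le_walkScale (h : WalkRegime V p L b β j) (A : Finset V)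
    (hE : ∀ m < j, PowEntryBound E (32 * L) b β m)
    (hA : ∀ m < j, EscapeBound E (charVec A) (16 * L * setScale p A) β m) (u v : V) :
    |avoiding E u (charVec A) j v| ≤ walkScale L b β (setScale p A) j := by
  have hσ := one_le_setScale p A
  rcases j with _ | j
  · simp only [avoiding, walkScale, Function.update_apply]
    split_ifs
    · simp [zero_le_one.trans hσ]
    · rw [abs_of_nonneg (charVec_nonneg A v)]
      exact (charVec_le_one A v).trans hσ
  · have hL := h.one_le_L
    have hb := h.one_le_b
    have hβ := h.β_nonneg
    have hsum : 5 / 2 * setScale p A + b * charVec A v ≤ 4 * (setScale p A * b) := by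
      nlinarith [mul_le_of_le_one_right (zero_le_one.trans hb) (charVec_le_one A v)]
    calc |avoiding E u (charVec A) (j + 1) v|
        ≤ 32 * L * (5 / 2 * setScale p A + b * charVec A v) * β ^ j :=
          (h.mono j.le_succ).abs_avoiding_charVec_succ_le A (fun m hm => hE m (by omega))
            (fun m hm => hA m (by omega)) u v
      _ ≤ 32 * L * (4 * (setScale p A * b)) * β ^ j := by gcongr
      _ = walkScale L b β (setScale p A) (j + 1) := by rw [walkScale]; ring

lemma mul_sum_avoiding_charVec_sq_le (h : WalkRegime V p L b β j) (A : Finset V)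
    (hE : ∀ m < j, PowEntryBound E (32 * L) b β m)
    (hA : ∀ m < j, EscapeBound E (charVec A) (16 * L * setScale p A) β m) (u : V) :
    p * ∑ v, avoiding E u (charVec A) j v ^ 2 ≤ walkScale L b β (setScale p A) j ^ 2 := by
  have hp := h.p_nonneg
  rcases j with _ | j
  · refine le_trans ?_ (mul_sum_charVec_sq_le hp A)
    refine mul_le_mul_of_nonneg_left (Finset.sum_le_sum fun v _ => ?_) hp
    simp only [avoiding, Function.update_apply]
    split_ifs
    · simpa only [zero_pow two_ne_zero] using sq_nonneg (charVec A v)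
    · rfl
  · set σ := setScale p A
    have hentry : ∀ v, avoiding E u (charVec A) (j + 1) v ^ 2 ≤
        (32 * L * β ^ j) ^ 2 * (25 / 2 * σ ^ 2 + 2 * b ^ 2 * charVec A v ^ 2) := fun v => by
      have hv := (h.mono j.le_succ).abs_avoiding_charVec_succ_le A (fun m hm => hE m (by omega))
        (fun m hm => hA m (by omega)) u v
      calc avoiding E u (charVec A) (j + 1) v ^ 2
          ≤ (32 * L * (5 / 2 * σ + b * charVec A v) * β ^ j) ^ 2 := by
            rw [← sq_abs]; gcongr
        _ = (32 * L * β ^ j) ^ 2 * (5 / 2 * σ + b * charVec A v) ^ 2 := by ring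
        _ ≤ _ := by gcongr; nlinarith [sq_nonneg (5 / 2 * σ - b * charVec A v)]
    calc p * ∑ v, avoiding E u (charVec A) (j + 1) v ^ 2
        ≤ p * ∑ v, (32 * L * β ^ j) ^ 2 * (25 / 2 * σ ^ 2 + 2 * b ^ 2 * charVec A v ^ 2) := by
          gcongr with v; exact hentry v
      _ = (32 * L * β ^ j) ^ 2 * (25 / 2 * σ ^ 2 * (Fintype.card V * p) +
            2 * b ^ 2 * (p * ∑ v, charVec A v ^ 2)) := by
          simp only [← Finset.mul_sum, Finset.sum_add_distrib, Finset.sum_const, Finset.card_univ,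
            nsmul_eq_mul]
          ring
      _ ≤ (32 * L * β ^ j) ^ 2 * (25 / 2 * σ ^ 2 * b ^ 2 + 2 * b ^ 2 * σ ^ 2) := by
          rw [h.sq_b]; gcongr; exact mul_sum_charVec_sq_le hp A
      _ ≤ (32 * L * β ^ j) ^ 2 * (16 * (σ ^ 2 * b ^ 2)) := by
          gcongr; nlinarith [mul_nonneg (sq_nonneg σ) (sq_nonneg b)]
      _ = walkScale L b β σ (j + 1) ^ 2 := by rw [walkScale]; ring

lemma escapeBound_charVec (h : WalkRegime V p L b β j) (A : Finset V)
    (hE : ∀ m < j, PowEntryBound E (32 * L) b β m)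
    (hA : ∀ m < j, EscapeBound E (charVec A) (16 * L * setScale p A) β m)
    (hB : ∀ u, BernsteinEvent E u (charVec A) p L (walkScale L b β (setScale p A) j) j) :
    EscapeBound E (charVec A) (16 * L * setScale p A) β j := by
  intro u
  have hL := h.one_le_L
  have hσ := one_le_setScale p A
  have hβ := h.β_nonneg
  refine (hB u (h.abs_avoiding_charVec_le_walkScale A hE hA u) <|
    (h.mul_sum_avoiding_charVec_sq_le A hE hA u).trans
      (le_mul_of_one_le_left (sq_nonneg _) hL)).trans ?_
  rcases j with _ | j
  · rw [walkScale, pow_zero]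
    nlinarith
  · calc 8 * L * walkScale L b β (setScale p A) (j + 1)
        = 64 * L * b * (16 * L * setScale p A * β ^ j) := by rw [walkScale]; ring
      _ ≤ β * (16 * L * setScale p A * β ^ j) := by gcongr; exact h.bernstein_le
      _ = _ := by ring

end WalkRegime

lemma WalkRegime.sum_abs_row_le (h : WalkRegime V p L b β J) (hE : ∀ u v, E u v ∈ Set.Icc (-p) 1)
    (hB : ∀ u, BernsteinEvent E u (charVec univ) p L
      (walkScale L b β (setScale p (univ : Finset V)) 0) 0)
    (u : V) : ∑ v, |E u v| ≤ 4 * b ^ 2 := by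
  have hb := h.one_le_b
  have hσ : setScale p (univ : Finset V) = b := by
    rw [setScale, Finset.card_univ, ← h.sq_b, Real.sqrt_sq (by linarith), max_eq_right hb]
  have hescape : |escape E u 1 1| ≤ 16 * L * b := by
    have := (h.mono J.zero_le).escapeBound_charVec (E := E) univ (by simp) (by simp) hB u
    simpa [charVec_univ, hσ] using this
  have hsum : ∑ v, E u v = escape E u 1 1 + E u u := by
    have := congrFun (mulVec_avoiding E u 1 0) u
    rw [← Finset.sum_erase_add _ _ (Finset.mem_univ u)]
    simp [escape, avoiding, mulVec, dotProduct, Function.update_apply, Finset.sum_ite,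
      Finset.filter_ne']
  have habs : ∀ v, |E u v| ≤ 2 * p + E u v := fun v =>
    abs_le.2 ⟨by linarith [(hE u v).1], by linarith [h.p_nonneg]⟩
  calc ∑ v, |E u v| ≤ ∑ v, (2 * p + E u v) := Finset.sum_le_sum fun v _ => habs v
    _ = 2 * b ^ 2 + ∑ v, E u v := by
        rw [Finset.sum_add_distrib, h.sq_b]; simp; ring
    _ ≤ 2 * b ^ 2 + (16 * L * b + 1) := by
        rw [hsum]; gcongr; exacts [(abs_le.1 hescape).2, (hE u u).2]
    _ ≤ 4 * b ^ 2 := by nlinarith [h.ten_mul_L_le, h.one_le_L]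

lemma WalkRegime.powEntryBound_zero (h : WalkRegime V p L b β J)
    (hE : ∀ u v, E u v ∈ Set.Icc (-p) 1) : PowEntryBound E (32 * L) b β 0 := by
  intro u v
  have hL := h.one_le_L
  have hfactor : 1 ≤ if v = u then b else 1 := by split_ifs; exacts [h.one_le_b, le_rfl]
  rw [zero_add, pow_one, pow_zero, mul_one]
  exact (h.abs_entry_le_one hE v u).trans (one_le_mul_of_one_le_of_one_le (by linarith) hfactor)

lemma WalkRegime.powEntryBound_succ (h : WalkRegime V p L b β (j + 1))
    (hE : ∀ u v, E u v ∈ Set.Icc (-p) 1) (hrow : ∀ u, ∑ v, |E u v| ≤ 4 * b ^ 2)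
    (hpow : ∀ m < j + 1, PowEntryBound E (32 * L) b β m)
    (hescape : ∀ w, ∀ m ≤ j + 1, EscapeBound E (charVec {w}) (16 * L) β m) :
    PowEntryBound E (32 * L) b β (j + 1) := by
  intro u v
  have hL := h.one_le_L
  split_ifs with huv
  · subst huv
    have hb := h.one_le_b
    exact abs_pow_add_two_diag_le (by positivity) hb
      (le_trans (by nlinarith) h.bernstein_le) hrow (fun u => h.abs_entry_le_one hE u u)
      (hpow j j.lt_succ_self) v
  · have hcol := abs_pow_succ_mulVec_apply_le (by positivity) (by positivity) h.one_le_b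
      h.length_mul_le hpow (hescape u) v
    rw [charVec_singleton, mulVec_single_one, Pi.single_eq_of_ne huv, abs_zero, zero_mul,
      add_zero] at hcol
    calc |(E ^ (j + 1 + 1)) v u| ≤ 2 * (16 * L) * β ^ (j + 1) := hcol
      _ = _ := by ring

theorem IsConcentrated.powEntryBound {𝒜 : Finset (Finset V)} (hB : IsConcentrated E p L b β J 𝒜)
    (h : WalkRegime V p L b β J) (hE : ∀ u v, E u v ∈ Set.Icc (-p) 1) (huniv : univ ∈ 𝒜)
    (hsingleton : ∀ w, {w} ∈ 𝒜) (hj : j ≤ J) : PowEntryBound E (32 * L) b β j := by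
  suffices key : PowEntryBound E (32 * L) b β j ∧
      ∀ w, EscapeBound E (charVec {w}) (16 * L) β j from key.1
  induction j using Nat.strong_induction_on with
  | _ j ih =>
    have hpow : ∀ m < j, PowEntryBound E (32 * L) b β m := fun m hm => (ih m hm (by omega)).1
    have hescape : ∀ w, ∀ m ≤ j, EscapeBound E (charVec {w}) (16 * L) β m := by
      intro w m hm
      rcases hm.lt_or_eq with hm | rfl
      · exact (ih m hm (by omega)).2 w
      · have hσ : setScale p {w} = 1 := setScale_singleton h.p_le_one w
        have := (h.mono hj).escapeBound_charVec {w} hpow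
          (fun i hi => by simpa [hσ] using (ih i hi (by omega)).2 w)
          (hB {w} (hsingleton w) m hj)
        simpa [hσ] using this
    refine ⟨?_, fun w => hescape w j le_rfl⟩
    rcases j with _ | j
    · exact h.powEntryBound_zero hE
    · exact (h.mono hj).powEntryBound_succ hE (h.sum_abs_row_le hE (hB univ huniv 0 J.zero_le))
        hpow hescape

theorem IsConcentrated.abs_pow_succ_mulVec_charVec_le {𝒜 : Finset (Finset V)}
    (hB : IsConcentrated E p L b β J 𝒜) (h : WalkRegime V p L b β J)
    (hpow : ∀ m ≤ J, PowEntryBound E (32 * L) b β m) {A : Finset V} (hA : A ∈ 𝒜) (hj : j ≤ J)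
    (u : V) : |(E ^ (j + 1) *ᵥ charVec A) u| ≤
      32 * L * (setScale p A + b * charVec A u) * β ^ j := by
  have hL := h.one_le_L
  have hb := h.one_le_b
  have hσ := one_le_setScale p A
  have hescape : ∀ m ≤ J, EscapeBound E (charVec A) (16 * L * setScale p A) β m := by
    intro m
    induction m using Nat.strong_induction_on with
    | _ m ih =>
      intro hm
      exact (h.mono hm).escapeBound_charVec A (fun i hi => hpow i (by omega))
        (fun i hi => ih i hi (by omega)) (hB A hA m hm)
  calc |(E ^ (j + 1) *ᵥ charVec A) u|
      ≤ 2 * (16 * L * setScale p A) * β ^ j + |charVec A u| * |(E ^ (j + 1)) u u| :=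
        abs_pow_succ_mulVec_apply_le (by positivity) (by positivity) hb (h.mono hj).length_mul_le
          (fun m hm => hpow m (by omega)) (fun m hm => hescape m (by omega)) u
    _ ≤ 2 * (16 * L * setScale p A) * β ^ j + charVec A u * (32 * L * b * β ^ j) := by
        rw [abs_of_nonneg (charVec_nonneg A u)]
        gcongr
        · exact charVec_nonneg A u
        · exact (hpow j hj).le_mul (by positivity) hb h.β_nonneg u u
    _ = _ := by ring

end Concentration

section OperatorNorm

open scoped Matrix.Norms.L2Operator

variable {V : Type*} [Fintype V] [DecidableEq V]

lemma l2_opNorm_le_card_mul {A : Matrix V V ℝ} {t : ℝ} (ht : 0 ≤ t) (hA : ∀ i j, |A i j| ≤ t) :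
    ‖A‖ ≤ Fintype.card V * t := by
  rw [Matrix.l2_opNorm_def]
  refine ContinuousLinearMap.opNorm_le_bound _ (by positivity) fun x => ?_
  have hrow : ∀ i, (A *ᵥ WithLp.ofLp x) i ^ 2 ≤ Fintype.card V * t ^ 2 * ∑ j, x j ^ 2 := fun i =>
    calc (A *ᵥ WithLp.ofLp x) i ^ 2 ≤ (∑ j, A i j ^ 2) * ∑ j, x j ^ 2 :=
          Finset.sum_mul_sq_le_sq_mul_sq Finset.univ (A i) x
      _ ≤ (∑ _j : V, t ^ 2) * ∑ j, x j ^ 2 := by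
          refine mul_le_mul_of_nonneg_right (Finset.sum_le_sum fun j _ => ?_) (by positivity)
          exact sq_le_sq' (abs_le.1 (hA i j)).1 (abs_le.1 (hA i j)).2
      _ = Fintype.card V * t ^ 2 * ∑ j, x j ^ 2 := by simp
  refine le_of_sq_le_sq ?_ (by positivity)
  rw [mul_pow, EuclideanSpace.real_norm_sq_eq, EuclideanSpace.real_norm_sq_eq]
  calc ∑ i, (A *ᵥ WithLp.ofLp x) i ^ 2 ≤ ∑ _i : V, Fintype.card V * t ^ 2 * ∑ j, x j ^ 2 :=
        Finset.sum_le_sum fun i _ => hrow i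
    _ = (Fintype.card V * t) ^ 2 * ∑ j, x j ^ 2 := by
        rw [Finset.sum_const, Finset.card_univ, nsmul_eq_mul]; ring

-- A high power of a self-adjoint matrix turns an entrywise bound into a norm bound, since the
-- dimension only enters through its `2 ^ i`-th root.
lemma l2_opNorm_le_of_abs_pow_apply_le {E : Matrix V V ℝ} (hE : E.IsSymm) {t : ℝ} (ht : 0 ≤ t)
    {i : ℕ} (hcard : (Fintype.card V : ℝ) ≤ 3 ^ 2 ^ i)
    (hpow : ∀ u v, |(E ^ 2 ^ i) u v| ≤ t ^ 2 ^ i) : ‖E‖ ≤ 3 * t := by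
  have hself : IsSelfAdjoint E := (conjTranspose_eq_transpose_of_trivial E).trans hE
  refine le_of_pow_le_pow_left₀ (pow_ne_zero i two_ne_zero) (by positivity) ?_
  calc ‖E‖ ^ 2 ^ i = ‖E ^ 2 ^ i‖ := (hself.norm_pow_two_pow i).symm
    _ ≤ Fintype.card V * t ^ 2 ^ i := l2_opNorm_le_card_mul (by positivity) hpow
    _ ≤ 3 ^ 2 ^ i * t ^ 2 ^ i := by gcongr
    _ = (3 * t) ^ 2 ^ i := (mul_pow _ _ _).symm

lemma PowEntryBound.l2_opNorm_le {E : Matrix V V ℝ} {τ b β : ℝ} {r : ℕ} (hr : r ≠ 0)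
    (hE : E.IsSymm) (hcard : (Fintype.card V : ℝ) ≤ 3 ^ r) (hτ : 0 ≤ τ) (hb : 1 ≤ b)
    (hβ : τ * b ≤ β) (hpow : ∀ m ≤ 2 * r, PowEntryBound E τ b β m) : ‖E‖ ≤ 3 * β := by
  have hβ0 : 0 ≤ β := le_trans (by positivity) hβ
  obtain ⟨i, hri, hir⟩ : ∃ i, r ≤ 2 ^ i ∧ 2 ^ i ≤ 2 * r :=
    ⟨Nat.log 2 r + 1, (Nat.lt_pow_succ_log_self one_lt_two r).le, by
      rw [pow_succ']; exact Nat.mul_le_mul_left 2 (Nat.pow_log_le_self 2 hr)⟩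
  obtain ⟨m, hm⟩ : ∃ m, 2 ^ i = m + 1 := Nat.exists_eq_succ_of_ne_zero (by positivity)
  refine l2_opNorm_le_of_abs_pow_apply_le (i := i) hE hβ0 (hcard.trans ?_) fun u v => ?_
  · exact pow_le_pow_right₀ (by norm_num) hri
  · rw [hm]
    calc |(E ^ (m + 1)) u v| ≤ τ * b * β ^ m := (hpow m (by omega)).le_mul hτ hb hβ0 v u
      _ ≤ β * β ^ m := by gcongr
      _ = β ^ (m + 1) := (pow_succ' β m).symm

end OperatorNorm

section Psi

variable {A B : Type*} [Ring A] [Algebra ℝ A] [Ring B] [Algebra ℝ B]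

/-- The polynomial `ψ` of `psiM` and `psiR`, evaluated in an arbitrary real algebra. -/
noncomputable def psi (lam mu : ℝ) (a : A) : A :=
  (-(1 / (lam * mu))) • (a * a) + (1 / lam + 1 / mu) • a

lemma map_psi (f : A →ₐ[ℝ] B) (lam mu : ℝ) (a : A) : f (psi lam mu a) = psi lam mu (f a) := by
  simp [psi]

lemma psi_add_sub_psi (lam mu : ℝ) (a b : A) :
    psi lam mu (a + b) - psi lam mu b =
      psi lam mu a - (1 / (lam * mu)) • (a * b) - (1 / (lam * mu)) • (b * a) := by
  simp only [psi, mul_add, add_mul, smul_add, neg_smul]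
  abel

lemma psi_mul_of_mul_eq {a e : A} (lam mu : ℝ) (h : a * e = a) :
    psi lam mu a * e = psi lam mu a := by
  rw [psi, add_mul, smul_mul_assoc, smul_mul_assoc, mul_assoc, h]

end Psi

section Perturbation

variable {lam mu δ ε β M : ℝ}

lemma psi_majorant_le (hmu : 0 < mu) (hlam : mu ≤ lam) (hε : ε ≤ 1) (hβ : 0 ≤ β)
    (hβε : β ≤ ε * mu) : 1 / (lam * mu) * β ^ 2 + (1 / lam + 1 / mu) * β ≤ 3 * ε := by
  have : 0 < lam := hmu.trans_le hlam
  have hinv : 1 / lam ≤ 1 / mu := one_div_le_one_div_of_le hmu hlam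
  have : 0 ≤ ε := nonneg_of_mul_nonneg_left (hβ.trans hβε) hmu
  calc 1 / (lam * mu) * β ^ 2 + (1 / lam + 1 / mu) * β
      = 1 / lam * (1 / mu) * β ^ 2 + (1 / lam + 1 / mu) * β := by
        rw [one_div_mul_one_div]
    _ ≤ 1 / mu * (1 / mu) * (ε * mu) ^ 2 + (1 / mu + 1 / mu) * (ε * mu) := by gcongr
    _ = ε ^ 2 + 2 * ε := by field_simp; ring
    _ ≤ 3 * ε := by nlinarith

lemma norm_psi_le {A : Type*} [NormedRing A] [NormedAlgebra ℝ A] {a : A} (hmu : 0 < mu)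
    (hlam : mu ≤ lam) (hε : ε ≤ 1) (ha : ‖a‖ ≤ ε * mu) : ‖psi lam mu a‖ ≤ 3 * ε := by
  have hlam0 : 0 < lam := hmu.trans_le hlam
  refine le_trans ?_ (psi_majorant_le hmu hlam hε (norm_nonneg a) ha)
  refine (norm_add_le _ _).trans ?_
  rw [neg_smul, norm_neg, norm_smul_of_nonneg (by positivity), norm_smul_of_nonneg (by positivity),
    sq]
  gcongr
  exact norm_mul_le a a

variable {F : Type*} [NormedAddCommGroup F] [NormedSpace ℝ F] {G E P : F →L[ℝ] F} {w : F}

lemma norm_apply_pow_psi_pow_apply_le (hmu : 0 < mu) (hlam : mu ≤ lam) (hε : ε ≤ 1) (hβ : 0 ≤ β)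
    (hβε : β ≤ ε * mu) (hM : 0 ≤ M) {R : ℕ} (hP : ∀ m ≤ R, ‖P ((E ^ m) w)‖ ≤ M * β ^ m) (j : ℕ) :
    ∀ m, m + 2 * j ≤ R → ‖P ((E ^ m) ((psi lam mu E ^ j) w))‖ ≤ M * β ^ m * (3 * ε) ^ j := by
  have hlam0 : 0 < lam := hmu.trans_le hlam
  have hε0 : 0 ≤ ε := nonneg_of_mul_nonneg_left (hβ.trans hβε) hmu
  induction j with
  | zero => intro m hm; simpa using hP m (by omega)
  | succ j ih =>
    intro m hm
    set z := (psi lam mu E ^ j) w with hz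
    have hexpand : P ((E ^ m) ((psi lam mu E ^ (j + 1)) w)) =
        (1 / lam + 1 / mu) • P ((E ^ (m + 1)) z) - (1 / (lam * mu)) • P ((E ^ (m + 2)) z) := by
      have hsplit : E ^ m * psi lam mu E =
          (1 / lam + 1 / mu) • E ^ (m + 1) - (1 / (lam * mu)) • E ^ (m + 2) := by
        rw [psi, mul_add, mul_smul_comm, mul_smul_comm, ← mul_assoc, ← pow_succ, ← pow_succ,
          neg_smul, neg_add_eq_sub]
      have := congrArg P (DFunLike.congr_fun hsplit z)
      simpa [pow_succ' (psi lam mu E), hz] using this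
    rw [hexpand]
    refine (norm_sub_le _ _).trans ?_
    rw [norm_smul_of_nonneg (by positivity), norm_smul_of_nonneg (by positivity)]
    calc (1 / lam + 1 / mu) * ‖P ((E ^ (m + 1)) z)‖ + 1 / (lam * mu) * ‖P ((E ^ (m + 2)) z)‖
        ≤ (1 / lam + 1 / mu) * (M * β ^ (m + 1) * (3 * ε) ^ j) +
            1 / (lam * mu) * (M * β ^ (m + 2) * (3 * ε) ^ j) := by
          gcongr
          exacts [ih (m + 1) (by omega), ih (m + 2) (by omega)]
      _ = M * β ^ m * (3 * ε) ^ j *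
            (1 / (lam * mu) * β ^ 2 + (1 / lam + 1 / mu) * β) := by ring
      _ ≤ M * β ^ m * (3 * ε) ^ j * (3 * ε) := by
          gcongr
          exact psi_majorant_le hmu hlam hε hβ hβε
      _ = _ := by ring

lemma norm_pow_apply_sub_pow_apply_le {X W : F →L[ℝ] F} {ξ θ N : ℝ} (hξ : 1 ≤ ξ) (hX : ‖X‖ ≤ ξ)
    (r : ℕ) (h : ∀ j < r, ‖(X - W) ((W ^ j) w)‖ ≤ N * θ ^ j) :
    ‖(X ^ r) w - (W ^ r) w‖ ≤ N * ξ ^ r * ∑ j ∈ range r, θ ^ j := by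
  induction r with
  | zero => simp
  | succ r ih =>
    have hlast := h r r.lt_succ_self
    have hstep : (X ^ (r + 1)) w - (W ^ (r + 1)) w =
        X ((X ^ r) w - (W ^ r) w) + (X - W) ((W ^ r) w) := by
      simp [pow_succ']
    calc ‖(X ^ (r + 1)) w - (W ^ (r + 1)) w‖
        ≤ ‖X‖ * ‖(X ^ r) w - (W ^ r) w‖ + ‖(X - W) ((W ^ r) w)‖ := by
          rw [hstep]
          exact (norm_add_le _ _).trans (by gcongr; exact X.le_opNorm _)
      _ ≤ ξ * (N * ξ ^ r * ∑ j ∈ range r, θ ^ j) + ξ ^ (r + 1) * (N * θ ^ r) := by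
          gcongr
          · exact ih fun j hj => h j (by omega)
          · exact hlast.trans
              (le_mul_of_one_le_left ((norm_nonneg _).trans hlast) (one_le_pow₀ hξ))
      _ = N * ξ ^ (r + 1) * ∑ j ∈ range (r + 1), θ ^ j := by
          rw [Finset.sum_range_succ]; ring

lemma one_div_mul_mul_le (hmu : 0 < mu) (hlam : mu ≤ lam) {s t : ℝ} (ht : 0 ≤ t) (hs : s ≤ lam)
    (htε : t ≤ ε * mu) : 1 / (lam * mu) * (s * t) ≤ ε := by
  have hlam0 : 0 < lam := hmu.trans_le hlam
  calc 1 / (lam * mu) * (s * t) ≤ 1 / (lam * mu) * (lam * (ε * mu)) := by gcongr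
    _ = ε := by field_simp

lemma norm_psi_add_le (hmu : 0 < mu) (hlam : mu ≤ lam) (hG : ‖G‖ ≤ lam)
    (hψ : ‖psi lam mu G‖ ≤ 1 + δ) (hε : ε ≤ 1) (hE : ‖E‖ ≤ ε * mu) :
    ‖psi lam mu (G + E)‖ ≤ 1 + δ + 5 * ε := by
  have hlam0 : 0 < lam := hmu.trans_le hlam
  have hcross : 1 / (lam * mu) * (‖G‖ * ‖E‖) ≤ ε :=
    one_div_mul_mul_le hmu hlam (norm_nonneg E) hG hE
  have hGE : ‖(1 / (lam * mu)) • (G * E)‖ ≤ ε := by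
    rw [norm_smul, Real.norm_of_nonneg (by positivity)]
    exact le_trans (by gcongr; exact norm_mul_le G E) hcross
  have hEG : ‖(1 / (lam * mu)) • (E * G)‖ ≤ ε := by
    rw [norm_smul, Real.norm_of_nonneg (by positivity)]
    exact le_trans (by gcongr; exact (norm_mul_le E G).trans_eq (mul_comm _ _)) hcross
  rw [← sub_add_cancel (psi lam mu (G + E)) (psi lam mu E), psi_add_sub_psi]
  linarith [norm_add_le (psi lam mu G - (1 / (lam * mu)) • (G * E) - (1 / (lam * mu)) • (E * G))
      (psi lam mu E), norm_psi_le hmu hlam hε hE,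
    norm_sub_le (psi lam mu G - (1 / (lam * mu)) • (G * E)) ((1 / (lam * mu)) • (E * G)),
    norm_sub_le (psi lam mu G) ((1 / (lam * mu)) • (G * E))]

lemma norm_psi_add_sub_psi_apply_le (hmu : 0 < mu) (hlam : mu ≤ lam) (hG : ‖G‖ ≤ lam)
    (hGP : G * P = G) (hψ : ‖psi lam mu G‖ ≤ 1 + δ) (hE : ‖E‖ ≤ ε * mu) {z : F} {N : ℝ}
    (hz : ‖P z‖ ≤ N) (hEz : ‖P (E z)‖ ≤ ε * mu * N) :
    ‖(psi lam mu (G + E) - psi lam mu E) z‖ ≤ (1 + δ + 2 * ε) * N := by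
  have hlam0 : 0 < lam := hmu.trans_le hlam
  have : 0 ≤ N := (norm_nonneg _).trans hz
  have hεmu : 0 ≤ ε * mu := (norm_nonneg E).trans hE
  have hGle : ∀ x, ‖G x‖ ≤ lam * ‖P x‖ := fun x => by
    conv_lhs => rw [← hGP]
    exact (G.le_opNorm (P x)).trans (by gcongr)
  have hmain : ‖psi lam mu G z‖ ≤ (1 + δ) * N := by
    rw [← psi_mul_of_mul_eq lam mu hGP]
    exact ((psi lam mu G).le_opNorm (P z)).trans (by gcongr; exact (norm_nonneg _).trans hψ)
  have hGE : ‖(1 / (lam * mu)) • G (E z)‖ ≤ ε * N := by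
    rw [norm_smul_of_nonneg (by positivity)]
    calc 1 / (lam * mu) * ‖G (E z)‖ ≤ 1 / (lam * mu) * (lam * (ε * mu * N)) := by
          gcongr; exact (hGle _).trans (by gcongr)
      _ = ε * N := by field_simp
  have hEG : ‖(1 / (lam * mu)) • E (G z)‖ ≤ ε * N := by
    rw [norm_smul_of_nonneg (by positivity)]
    calc 1 / (lam * mu) * ‖E (G z)‖ ≤ 1 / (lam * mu) * (ε * mu * (lam * N)) := by
          gcongr
          exact (E.le_opNorm _).trans (by gcongr; exact (hGle z).trans (by gcongr))
      _ = ε * N := by field_simp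
  have hexpand : (psi lam mu (G + E) - psi lam mu E) z =
      psi lam mu G z - (1 / (lam * mu)) • G (E z) - (1 / (lam * mu)) • E (G z) := by
    rw [psi_add_sub_psi]; rfl
  rw [hexpand]
  linarith [norm_sub_le (psi lam mu G z - (1 / (lam * mu)) • G (E z)) ((1 / (lam * mu)) • E (G z)),
    norm_sub_le (psi lam mu G z) ((1 / (lam * mu)) • G (E z))]

lemma norm_psi_add_pow_sub_psi_pow_apply_le (hmu : 0 < mu) (hlam : mu ≤ lam) (hG : ‖G‖ ≤ lam)
    (hGP : G * P = G) (hδ : 0 ≤ δ) (hδ1 : δ ≤ 1) (hψ : ‖psi lam mu G‖ ≤ 1 + δ)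
    (hε : ε ≤ 1 / 10) (hE : ‖E‖ ≤ ε * mu) (hβ : 0 ≤ β) (hβε : β ≤ ε * mu) {r : ℕ}
    (hP : ∀ m ≤ 2 * r, ‖P ((E ^ m) w)‖ ≤ M * β ^ m) :
    ‖(psi lam mu (G + E) ^ r) w - (psi lam mu E ^ r) w‖ ≤ 6 * M * (1 + δ + 5 * ε) ^ r := by
  have hε0 : 0 ≤ ε := nonneg_of_mul_nonneg_left (hβ.trans hβε) hmu
  have hM : 0 ≤ M := by simpa using (norm_nonneg _).trans (hP 0 (Nat.zero_le _))
  have hterm : ∀ j < r, ‖(psi lam mu (G + E) - psi lam mu E) ((psi lam mu E ^ j) w)‖ ≤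
      3 * M * (1 / 2) ^ j := by
    intro j hj
    have hPz : ∀ m ≤ 1, ‖P ((E ^ m) ((psi lam mu E ^ j) w))‖ ≤ β ^ m * (M * (1 / 2) ^ j) := by
      intro m hm
      calc _ ≤ M * β ^ m * (3 * ε) ^ j := norm_apply_pow_psi_pow_apply_le hmu hlam
            (by linarith) hβ hβε hM hP j m (by omega)
        _ ≤ M * β ^ m * (1 / 2) ^ j := by gcongr; linarith
        _ = β ^ m * (M * (1 / 2) ^ j) := by ring
    calc _ ≤ (1 + δ + 2 * ε) * (M * (1 / 2) ^ j) :=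
          norm_psi_add_sub_psi_apply_le hmu hlam hG hGP hψ hE
            (by simpa only [pow_zero, one_mul, one_apply_eq_self] using
              hPz 0 zero_le_one)
            (by
              have hPE := hPz 1 le_rfl
              rw [pow_one, pow_one] at hPE
              exact hPE.trans (by gcongr))
      _ ≤ 3 * (M * (1 / 2) ^ j) := by gcongr; linarith
      _ = 3 * M * (1 / 2) ^ j := by ring
  calc _ ≤ 3 * M * (1 + δ + 5 * ε) ^ r * ∑ j ∈ range r, (1 / 2 : ℝ) ^ j :=
        norm_pow_apply_sub_pow_apply_le (by linarith)
          (norm_psi_add_le hmu hlam hG hψ (by linarith) hE) r hterm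
    _ ≤ 3 * M * (1 + δ + 5 * ε) ^ r * 2 := by gcongr; exact sum_geometric_two_le r
    _ = 6 * M * (1 + δ + 5 * ε) ^ r := by ring

theorem norm_psi_pow_sub_psi_pow_apply_le (hmu : 0 < mu) (hlam : mu ≤ lam) (hG : ‖G‖ ≤ lam)
    (hGP : G * P = G) (hδ : 0 ≤ δ) (hδ1 : δ ≤ 1) (hψ : ‖psi lam mu G‖ ≤ 1 + δ)
    (hε : ε ≤ 1 / 10) (hE : ‖E‖ ≤ ε * mu) (hβ : 0 ≤ β) (hβε : β ≤ ε * mu) {r : ℕ} (hr : r ≠ 0)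
    (hP : ∀ m ≤ 2 * r, ‖P ((E ^ m) w)‖ ≤ M * β ^ m) :
    ‖(psi lam mu (G + E) ^ r - psi lam mu G ^ r) w‖ ≤
      7 * M * (1 + δ + 5 * ε) ^ r + (3 * ε) ^ r * ‖w‖ := by
  have hε0 : 0 ≤ ε := nonneg_of_mul_nonneg_left (hβ.trans hβε) hmu
  have hdiff := norm_psi_add_pow_sub_psi_pow_apply_le hmu hlam hG hGP hδ hδ1 hψ hε hE hβ hβε hP
  have hnoise : ‖(psi lam mu E ^ r) w‖ ≤ (3 * ε) ^ r * ‖w‖ := by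
    refine (ContinuousLinearMap.le_opNorm _ w).trans ?_
    gcongr
    refine (norm_pow_le' _ (Nat.pos_of_ne_zero hr)).trans ?_
    gcongr
    exact norm_psi_le hmu hlam (by linarith) hE
  have hmean : ‖(psi lam mu G ^ r) w‖ ≤ (1 + δ + 5 * ε) ^ r * M := by
    have hfactor : psi lam mu G ^ r * P = psi lam mu G ^ r := by
      obtain ⟨s, rfl⟩ := Nat.exists_eq_succ_of_ne_zero hr
      rw [pow_succ, mul_assoc, psi_mul_of_mul_eq lam mu hGP]
    rw [← hfactor]
    refine ((psi lam mu G ^ r).le_opNorm (P w)).trans ?_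
    gcongr
    · refine (norm_pow_le' _ (Nat.pos_of_ne_zero hr)).trans ?_
      gcongr
      linarith
    · simpa using hP 0 (Nat.zero_le _)
  have hsplit : (psi lam mu (G + E) ^ r - psi lam mu G ^ r) w =
      ((psi lam mu (G + E) ^ r) w - (psi lam mu E ^ r) w) + (psi lam mu E ^ r) w -
        (psi lam mu G ^ r) w := by
    rw [sub_add_cancel]; rfl
  rw [hsplit]
  linarith [norm_sub_le (((psi lam mu (G + E) ^ r) w - (psi lam mu E ^ r) w) +
      (psi lam mu E ^ r) w) ((psi lam mu G ^ r) w),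
    norm_add_le ((psi lam mu (G + E) ^ r) w - (psi lam mu E ^ r) w) ((psi lam mu E ^ r) w)]

end Perturbation

section Spectral

open scoped Matrix.Norms.L2Operator

variable {n : ℕ} {A : Matrix (Fin n) (Fin n) ℝ} {lam : Fin n → ℝ} {v : Fin n → Fin n → ℝ}

lemma enorm_eq_norm (x : Fin n → ℝ) : SBM.enorm x = ‖WithLp.toLp 2 x‖ := by
  simp [SBM.enorm, EuclideanSpace.norm_eq]

lemma dotProduct_mulVec_le_norm_mul (A : Matrix (Fin n) (Fin n) ℝ) (x : Fin n → ℝ) :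
    x ⬝ᵥ A *ᵥ x ≤ ‖A‖ * (x ⬝ᵥ x) := by
  have hinner : x ⬝ᵥ A *ᵥ x = inner ℝ (WithLp.toLp 2 x) (WithLp.toLp 2 (A *ᵥ x)) := by
    rw [EuclideanSpace.inner_toLp_toLp, star_trivial, dotProduct_comm]
  have hself : x ⬝ᵥ x = ‖WithLp.toLp 2 x‖ ^ 2 := by
    rw [EuclideanSpace.real_norm_sq_eq]; simp [dotProduct, sq]
  rw [hinner, hself]
  calc _ ≤ ‖WithLp.toLp 2 x‖ * ‖WithLp.toLp 2 (A *ᵥ x)‖ := real_inner_le_norm _ _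
    _ ≤ ‖WithLp.toLp 2 x‖ * (‖A‖ * ‖WithLp.toLp 2 x‖) := by
        gcongr; exact Matrix.l2_opNorm_mulVec A _
    _ = _ := by ring

namespace IsSpectralDecomp

lemma transpose_mem_unitaryGroup (h : IsSpectralDecomp A lam v) :
    (Matrix.of v)ᵀ ∈ Matrix.unitaryGroup (Fin n) ℝ := by
  rw [Matrix.mem_unitaryGroup_iff']
  ext i j
  rw [star_eq_conjTranspose, conjTranspose_eq_transpose_of_trivial, transpose_transpose,
    Matrix.one_apply, ← h.2.1 i j]
  rfl

lemma eq_conj_diagonal (h : IsSpectralDecomp A lam v) :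
    A = (Matrix.of v)ᵀ * diagonal lam * Matrix.of v := by
  rw [h.2.2]
  ext a b
  rw [Matrix.sum_apply, Matrix.mul_apply]
  refine Finset.sum_congr rfl fun i _ => ?_
  rw [Matrix.mul_diagonal]
  simp [Matrix.vecMulVec_apply]
  ring

lemma exists_isometric_algHom (h : IsSpectralDecomp A lam v) :
    ∃ f : (Fin n → ℝ) →ₐ[ℝ] Matrix (Fin n) (Fin n) ℝ, f lam = A ∧ ∀ d, ‖f d‖ = ‖d‖ := by
  let U : Matrix.unitaryGroup (Fin n) ℝ := ⟨(Matrix.of v)ᵀ, h.transpose_mem_unitaryGroup⟩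
  refine ⟨(AlgHomClass.toAlgHom (Unitary.conjStarAlgAut ℝ _ U)).comp (Matrix.diagonalAlgHom ℝ), ?_,
    fun d => ?_⟩
  · exact h.eq_conj_diagonal.symm
  · change ‖(U : Matrix (Fin n) (Fin n) ℝ) * diagonal d * (star U : Matrix.unitaryGroup (Fin n) ℝ)‖
      = ‖d‖
    rw [CStarRing.norm_mul_coe_unitary, CStarRing.norm_coe_unitary_mul, Matrix.l2_opNorm_diagonal]

lemma norm_eq (h : IsSpectralDecomp A lam v) : ‖A‖ = ‖lam‖ := by
  obtain ⟨f, rfl, hf⟩ := h.exists_isometric_algHom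
  exact hf lam

lemma norm_psi_eq (h : IsSpectralDecomp A lam v) (l mu : ℝ) : ‖psi l mu A‖ = ‖psi l mu lam‖ := by
  obtain ⟨f, rfl, hf⟩ := h.exists_isometric_algHom
  rw [← map_psi, hf]

lemma mulVec_eq (h : IsSpectralDecomp A lam v) (i : Fin n) : A *ᵥ v i = lam i • v i := by
  rw [h.2.2, Matrix.sum_mulVec, Finset.sum_eq_single i]
  · rw [Matrix.smul_mulVec, Matrix.vecMulVec_mulVec, h.2.1 i i]; simp
  · intro j _ hj
    rw [Matrix.smul_mulVec, Matrix.vecMulVec_mulVec, h.2.1 j i, if_neg hj]; simp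
  · simp

lemma nonneg (h : IsSpectralDecomp A lam v) (hA : ∀ x, 0 ≤ x ⬝ᵥ A *ᵥ x) (i : Fin n) :
    0 ≤ lam i := by
  simpa [h.mulVec_eq i, dotProduct_smul, h.2.1 i i] using hA (v i)

lemma le_zero (h : IsSpectralDecomp A lam v) (hn : 0 < n) (i : Fin n) : lam i ≤ lam ⟨0, hn⟩ :=
  h.1 (Fin.mk_le_of_le_val (Nat.zero_le _))

-- The plane spanned by two eigenvectors meets the hyperplane orthogonal to `y`.
lemma le_of_forall_orthogonal (h : IsSpectralDecomp A lam v) {y : Fin n → ℝ} {t : ℝ}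
    (hy : ∀ x, y ⬝ᵥ x = 0 → x ⬝ᵥ A *ᵥ x ≤ t * (x ⬝ᵥ x)) {i j : Fin n} (hij : i < j) :
    lam j ≤ t := by
  obtain ⟨a, b, hab, horth⟩ :
      ∃ a b : ℝ, 0 < a ^ 2 + b ^ 2 ∧ a * (y ⬝ᵥ v i) + b * (y ⬝ᵥ v j) = 0 := by
    by_cases hz : y ⬝ᵥ v j = 0
    · exact ⟨0, 1, by norm_num, by rw [hz]; ring⟩
    · exact ⟨y ⬝ᵥ v j, -(y ⬝ᵥ v i), by positivity, by ring⟩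
  have hinner : ∀ c d : ℝ, (a • v i + b • v j) ⬝ᵥ (c • v i + d • v j) = a * c + b * d := by
    intro c d
    simp only [dotProduct_add, add_dotProduct, dotProduct_smul, smul_dotProduct, h.2.1, if_true,
      if_neg hij.ne, if_neg hij.ne', smul_eq_mul]
    ring
  have hform := hy (a • v i + b • v j) (by
    simpa only [dotProduct_add, dotProduct_smul, smul_eq_mul] using horth)
  rw [Matrix.mulVec_add, Matrix.mulVec_smul, Matrix.mulVec_smul, h.mulVec_eq, h.mulVec_eq,
    smul_smul, smul_smul, hinner, hinner] at hform
  refine le_of_mul_le_mul_left ?_ hab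
  linarith [mul_le_mul_of_nonneg_left (h.1 hij.le) (mul_self_nonneg a)]

lemma norm_eq_zero_index (h : IsSpectralDecomp A lam v) (hA : ∀ x, 0 ≤ x ⬝ᵥ A *ᵥ x) (hn : 0 < n) :
    ‖A‖ = lam ⟨0, hn⟩ := by
  rw [h.norm_eq]
  refine le_antisymm ((pi_norm_le_iff_of_nonneg (h.nonneg hA _)).2 fun i => ?_)
    ((le_abs_self _).trans (norm_le_pi_norm lam _))
  rw [Real.norm_of_nonneg (h.nonneg hA i)]
  exact h.le_zero hn i

end IsSpectralDecomp

-- `1 - ψ(t) = (λ - t) (μ - t) / (λ μ)`, so `ψ` exceeds `1` only between `μ` and `λ`.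
lemma psi_mem_Icc {l mu δ t : ℝ} (hmu : 0 < mu) (hl : mu ≤ l) (hδ : 0 ≤ δ) (ht : 0 ≤ t)
    (htl : t ≤ l) (htmu : t = l ∨ t ≤ (1 + δ) * mu) : psi l mu t ∈ Set.Icc 0 (1 + δ) := by
  have hl0 : 0 < l := hmu.trans_le hl
  have hpsi : psi l mu t = t * (l + mu - t) / (l * mu) := by
    simp only [psi, smul_eq_mul]; field_simp; ring
  have hcross : (l - t) * (t - mu) ≤ δ * mu * l := by
    have : (l - t) * (t - mu) ≤ (l - t) * (δ * mu) := by
      rcases htmu with rfl | h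
      · simp
      · gcongr
        linarith
    nlinarith [mul_nonneg ht (mul_nonneg hδ hmu.le)]
  rw [hpsi]
  refine ⟨div_nonneg (mul_nonneg ht (by linarith)) (by positivity), ?_⟩
  rw [div_le_iff₀ (by positivity)]
  linarith

end Spectral

section Clusters

open scoped Matrix.Norms.L2Operator

variable {n k : ℕ} {p q : ℝ} {cl : Fin n → Fin k}

/-- The vertex set of cluster `c`, of cardinality `clusterSize cl c`. -/
def cluster (cl : Fin n → Fin k) (c : Fin k) : Finset (Fin n) := univ.filter fun v => cl v = c

lemma mem_cluster {c : Fin k} {v : Fin n} : v ∈ cluster cl c ↔ cl v = c := by simp [cluster]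

lemma clusterSize_pos (cl : Fin n → Fin k) (u : Fin n) : 0 < clusterSize cl (cl u) :=
  Finset.card_pos.2 ⟨u, mem_cluster.2 rfl⟩

lemma sum_cluster_sum (cl : Fin n → Fin k) (f : Fin n → ℝ) :
    ∑ c, ∑ v ∈ cluster cl c, f v = ∑ v, f v :=
  Finset.sum_fiberwise univ cl f

lemma sum_charVec_cluster (cl : Fin n → Fin k) (u : Fin n) : ∑ c, charVec (cluster cl c) u = 1 := by
  simp [charVec, mem_cluster]

lemma dotProduct_meanMatrix_mulVec (p q : ℝ) (cl : Fin n → Fin k) (x : Fin n → ℝ) :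
    x ⬝ᵥ meanMatrix n k p q cl *ᵥ x =
      (p - q) * ∑ c, (∑ v ∈ cluster cl c, x v) ^ 2 + q * (∑ v, x v) ^ 2 := by
  have hsq : ∑ c, (∑ v ∈ cluster cl c, x v) ^ 2 =
      ∑ u, ∑ v, if cl v = cl u then x u * x v else 0 := by
    have hprod : ∀ c, (∑ v ∈ cluster cl c, x v) ^ 2 =
        ∑ u ∈ cluster cl c, ∑ v, if cl v = cl u then x u * x v else 0 := fun c => by
      rw [sq, Finset.sum_mul_sum]
      refine Finset.sum_congr rfl fun u hu => ?_
      rw [mem_cluster.1 hu, ← Finset.sum_filter]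
      rfl
    simp only [hprod, sum_cluster_sum]
  rw [hsq, sq, Finset.sum_mul_sum]
  simp only [dotProduct, Matrix.mulVec, Finset.mul_sum, ← Finset.sum_add_distrib, meanMatrix,
    Matrix.of_apply]
  refine Finset.sum_congr rfl fun u _ => Finset.sum_congr rfl fun v _ => ?_
  by_cases h : cl u = cl v
  · simp only [h, if_true]; ring
  · simp only [h, Ne.symm h, if_false]; ring

lemma dotProduct_meanMatrix_mulVec_nonneg (hq : 0 ≤ q) (hpq : q < p) (cl : Fin n → Fin k)
    (x : Fin n → ℝ) : 0 ≤ x ⬝ᵥ meanMatrix n k p q cl *ᵥ x := by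
  have : 0 < p - q := sub_pos.2 hpq
  rw [dotProduct_meanMatrix_mulVec]
  positivity

lemma sum_sq_cluster_sum_le {s : ℝ} (hs : ∀ c, (clusterSize cl c : ℝ) ≤ s) (x : Fin n → ℝ) :
    ∑ c, (∑ v ∈ cluster cl c, x v) ^ 2 ≤ s * ∑ v, x v ^ 2 := by
  rw [← sum_cluster_sum cl fun v => x v ^ 2, Finset.mul_sum]
  gcongr with c
  exact sq_sum_le_card_mul_sum_sq.trans (by gcongr; exact hs c)

variable {lam : Fin n → ℝ} {v : Fin n → Fin n → ℝ}

lemma meanMatrix_eigenvalue_le (hpq : q < p)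
    (h : IsSpectralDecomp (meanMatrix n k p q cl) lam v) {s : ℝ}
    (hs : ∀ c, (clusterSize cl c : ℝ) ≤ s) {i j : Fin n} (hij : i < j) :
    lam j ≤ (p - q) * s := by
  refine h.le_of_forall_orthogonal (y := 1) (fun x hx => ?_) hij
  rw [one_dotProduct] at hx
  rw [dotProduct_meanMatrix_mulVec, hx, zero_pow two_ne_zero, mul_zero, add_zero, mul_assoc]
  have hcs := sum_sq_cluster_sum_le hs x
  rw [show x ⬝ᵥ x = ∑ v, x v ^ 2 by simp [dotProduct, sq]]
  exact mul_le_mul_of_nonneg_left hcs (sub_pos.2 hpq).le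

lemma mul_div_le_norm_meanMatrix (hn : 0 < n) (hk : 0 < k) (hq : 0 ≤ q) (hpq : q < p)
    (cl : Fin n → Fin k) : (p - q) * ((n : ℝ) / k) ≤ ‖meanMatrix n k p q cl‖ := by
  have hn' : (0 : ℝ) < n := mod_cast hn
  have hk' : (0 : ℝ) < k := mod_cast hk
  have hcs : (n : ℝ) ^ 2 / k ≤ ∑ c, (∑ v ∈ cluster cl c, (1 : Fin n → ℝ) v) ^ 2 := by
    rw [div_le_iff₀' hk']
    have := sq_sum_le_card_mul_sum_sq (s := (univ : Finset (Fin k)))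
      (f := fun c => ∑ v ∈ cluster cl c, (1 : Fin n → ℝ) v)
    rw [sum_cluster_sum] at this
    simpa using this
  have hform := dotProduct_mulVec_le_norm_mul (meanMatrix n k p q cl) 1
  rw [dotProduct_meanMatrix_mulVec, show (1 : Fin n → ℝ) ⬝ᵥ 1 = n by simp] at hform
  refine le_of_mul_le_mul_right ?_ hn'
  calc (p - q) * ((n : ℝ) / k) * n = (p - q) * ((n : ℝ) ^ 2 / k) := by ring
    _ ≤ (p - q) * ∑ c, (∑ v ∈ cluster cl c, (1 : Fin n → ℝ) v) ^ 2 :=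
        mul_le_mul_of_nonneg_left hcs (sub_pos.2 hpq).le
    _ ≤ _ := le_trans (le_add_of_nonneg_right (by positivity)) hform

lemma norm_psi_meanMatrix_le (hn : 0 < n) (hk : 0 < k) (hq : 0 ≤ q) (hpq : q < p)
    (h : IsSpectralDecomp (meanMatrix n k p q cl) lam v) {δ : ℝ} (hδ : 0 ≤ δ)
    (hs : ∀ c, (clusterSize cl c : ℝ) ≤ (1 + δ) * ((n : ℝ) / k)) :
    ‖psi (lam ⟨0, hn⟩) ((p - q) * ((n : ℝ) / k)) (meanMatrix n k p q cl)‖ ≤ 1 + δ := by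
  have hG := dotProduct_meanMatrix_mulVec_nonneg hq hpq cl
  have hmu : 0 < (p - q) * ((n : ℝ) / k) :=
    mul_pos (sub_pos.2 hpq) (div_pos (mod_cast hn) (mod_cast hk))
  have hmul : (p - q) * ((n : ℝ) / k) ≤ lam ⟨0, hn⟩ :=
    (mul_div_le_norm_meanMatrix hn hk hq hpq cl).trans_eq (h.norm_eq_zero_index hG hn)
  rw [h.norm_psi_eq, pi_norm_le_iff_of_nonneg (by positivity)]
  intro i
  have hcase : lam i = lam ⟨0, hn⟩ ∨ lam i ≤ (1 + δ) * ((p - q) * ((n : ℝ) / k)) := by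
    rcases (Nat.zero_le i).eq_or_lt with h0 | h0
    · exact Or.inl (congrArg lam (Fin.ext h0.symm))
    · refine Or.inr ((meanMatrix_eigenvalue_le hpq h hs (i := ⟨0, hn⟩) h0).trans_eq ?_)
      ring
  have hmem := psi_mem_Icc hmu hmul hδ (h.nonneg hG i) (h.le_zero hn i) hcase
  exact (Real.norm_of_nonneg hmem.1).trans_le hmem.2

/-- Averaging over clusters: the orthogonal projection onto the vectors that are constant on every
cluster. -/
noncomputable def clusterProj (cl : Fin n → Fin k) : Matrix (Fin n) (Fin n) ℝ :=
  Matrix.of fun u v => charVec (cluster cl (cl u)) v / clusterSize cl (cl u)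

lemma meanMatrix_mul_clusterProj (p q : ℝ) (cl : Fin n → Fin k) :
    meanMatrix n k p q cl * clusterProj cl = meanMatrix n k p q cl := by
  ext u v
  have h0 : (clusterSize cl (cl v) : ℝ) ≠ 0 := (Nat.cast_pos.2 (clusterSize_pos cl v)).ne'
  have hterm : ∀ w, meanMatrix n k p q cl u w * clusterProj cl w v =
      if cl w = cl v then meanMatrix n k p q cl u v / clusterSize cl (cl v) else 0 := by
    intro w
    simp only [meanMatrix, clusterProj, charVec, mem_cluster, Matrix.of_apply]
    by_cases h : cl w = cl v
    · simp [h, div_eq_mul_inv]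
    · simp [h, Ne.symm h]
  rw [Matrix.mul_apply, Finset.sum_congr rfl fun w _ => hterm w, ← Finset.sum_filter,
    Finset.sum_const, nsmul_eq_mul]
  exact mul_div_cancel₀ _ h0

lemma clusterProj_mulVec (cl : Fin n → Fin k) (x : Fin n → ℝ) (u : Fin n) :
    (clusterProj cl *ᵥ x) u = (∑ v ∈ cluster cl (cl u), x v) / clusterSize cl (cl u) := by
  rw [← charVec_dotProduct]
  simp only [mulVec, dotProduct, Finset.sum_div, clusterProj, of_apply, div_mul_eq_mul_div]

lemma enorm_clusterProj_mulVec_sq (cl : Fin n → Fin k) (x : Fin n → ℝ) :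
    SBM.enorm (clusterProj cl *ᵥ x) ^ 2 =
      ∑ c, (∑ v ∈ cluster cl c, x v) ^ 2 / clusterSize cl c := by
  rw [SBM.enorm, Real.sq_sqrt (by positivity),
    ← sum_cluster_sum cl fun u => (clusterProj cl *ᵥ x) u ^ 2]
  refine Finset.sum_congr rfl fun c _ => ?_
  have hconst : ∀ u ∈ cluster cl c, (clusterProj cl *ᵥ x) u ^ 2 =
      ((∑ v ∈ cluster cl c, x v) / clusterSize cl c) ^ 2 := fun u hu => by
    rw [clusterProj_mulVec, mem_cluster.1 hu]
  rw [Finset.sum_congr rfl hconst, Finset.sum_const, nsmul_eq_mul,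
    show #(cluster cl c) = clusterSize cl c from rfl]
  field_simp

lemma enorm_clusterProj_mulVec_le (hk : 0 < k) {b T : ℝ} (hb : b ^ 2 = n * p) (hT : 0 ≤ T)
    (hs : ∀ c, (n : ℝ) / (2 * k) ≤ clusterSize cl c) (hp : 1 ≤ (n : ℝ) / (2 * k) * p)
    {x : Fin n → ℝ} {u : Fin n}
    (hx : ∀ c, |∑ v ∈ cluster cl c, x v| ≤
      T * (setScale p (cluster cl c) + b * charVec (cluster cl c) u)) :
    SBM.enorm (clusterProj cl *ᵥ x) ≤ 3 * T * √(k * p) := by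
  have hk' : (0 : ℝ) < k := mod_cast hk
  have hs0 : (0 : ℝ) < n / (2 * k) :=
    (by positivity : (0 : ℝ) ≤ n / (2 * k)).lt_of_ne fun h => by rw [← h] at hp; linarith
  have hp0 : 0 ≤ p := (pos_of_mul_pos_right (one_pos.trans_le hp) hs0.le).le
  have hterm : ∀ c, (∑ v ∈ cluster cl c, x v) ^ 2 / clusterSize cl c ≤
      2 * T ^ 2 * p * (1 + 2 * k * charVec (cluster cl c) u) := by
    intro c
    set χ := charVec (cluster cl c) u with hχ
    have hχsq : χ ^ 2 = χ := by simp [hχ, charVec]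
    have hχ0 : 0 ≤ χ := charVec_nonneg _ _
    have hscale : setScale p (cluster cl c) ^ 2 = clusterSize cl c * p := by
      rw [setScale, max_eq_right, Real.sq_sqrt (by positivity)]
      · rfl
      · exact Real.one_le_sqrt.2 (hp.trans (mul_le_mul_of_nonneg_right (hs c) hp0))
    have hn : (n : ℝ) ≤ 2 * k * clusterSize cl c := by
      rw [← div_le_iff₀' (by positivity)]; exact hs c
    rw [div_le_iff₀ (hs0.trans_le (hs c))]
    calc (∑ v ∈ cluster cl c, x v) ^ 2 ≤ (T * (setScale p (cluster cl c) + b * χ)) ^ 2 := by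
          rw [← sq_abs]; gcongr; exact hx c
      _ ≤ T ^ 2 * (2 * (setScale p (cluster cl c) ^ 2 + (b * χ) ^ 2)) := by
          rw [mul_pow]; gcongr; exact add_sq_le
      _ = 2 * T ^ 2 * p * (clusterSize cl c + n * χ) := by
          rw [mul_pow, hscale, hb, hχsq]; ring
      _ ≤ 2 * T ^ 2 * p * (clusterSize cl c + 2 * k * clusterSize cl c * χ) := by gcongr
      _ = _ := by ring
  refine le_of_sq_le_sq ?_ (by positivity)
  calc _ ≤ ∑ c, 2 * T ^ 2 * p * (1 + 2 * k * charVec (cluster cl c) u) := by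
        rw [enorm_clusterProj_mulVec_sq]; exact Finset.sum_le_sum fun c _ => hterm c
    _ = 6 * T ^ 2 * (k * p) := by
        rw [← Finset.mul_sum, Finset.sum_add_distrib, ← Finset.mul_sum, sum_charVec_cluster]
        simp; ring
    _ ≤ 9 * T ^ 2 * (k * p) := by gcongr; norm_num
    _ = _ := by rw [mul_pow, Real.sq_sqrt (by positivity)]; ring

end Clusters

section Bernstein

variable {Ω ι : Type*} [MeasurableSpace Ω] {μ : Measure Ω} {X : Ω → ℝ}
  {a v S S' p : ℝ}

/-- `X` is sub-gamma with variance proxy `v` on the scale `S`, in the form in which Bernstein's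
inequality uses it: the moment generating function is at most `exp (v * t ^ 2)` for
`|t| ≤ 1 / S`. -/
structure HasBernsteinMGF (X : Ω → ℝ) (v S : ℝ) (μ : Measure Ω) : Prop where
  integrable_exp_mul : ∀ t, |t| * S ≤ 1 → Integrable (fun ω => Real.exp (t * X ω)) μ
  mgf_le : ∀ t, |t| * S ≤ 1 → mgf X μ t ≤ Real.exp (v * t ^ 2)

lemma HasBernsteinMGF.const_mul (h : HasBernsteinMGF X v S μ) (ha : |a| * S ≤ S') :
    HasBernsteinMGF (fun ω => a * X ω) (a ^ 2 * v) S' μ := by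
  have hscale (t : ℝ) (ht : |t| * S' ≤ 1) : |t * a| * S ≤ 1 := by
    rw [abs_mul, mul_assoc]
    exact (mul_le_mul_of_nonneg_left ha (abs_nonneg t)).trans ht
  refine ⟨fun t ht => ?_, fun t ht => ?_⟩
  · simpa only [mul_assoc] using h.integrable_exp_mul _ (hscale t ht)
  · rw [mgf_const_mul, mul_comm a t]
    exact (h.mgf_le _ (hscale t ht)).trans_eq (by ring_nf)

variable [IsProbabilityMeasure μ]

lemma hasBernsteinMGF_of_abs_le_one (hX : AEMeasurable X μ) (hbound : ∀ᵐ ω ∂μ, |X ω| ≤ 1)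
    (hmean : ∫ ω, X ω ∂μ = 0) (hvar : ∫ ω, X ω ^ 2 ∂μ ≤ v) : HasBernsteinMGF X v 1 μ := by
  have hint : Integrable X μ := .of_bound hX.aestronglyMeasurable 1 hbound
  have hint_sq : Integrable (fun ω => X ω ^ 2) μ :=
    .of_bound (hX.pow_const 2).aestronglyMeasurable 1 <| hbound.mono fun ω h => by
      simpa using h
  have hint_exp (t : ℝ) : Integrable (fun ω => Real.exp (t * X ω)) μ :=
    integrable_exp_mul_of_mem_Icc hX (hbound.mono fun _ h => abs_le.1 h)
  refine ⟨fun t _ => hint_exp t, fun t ht => ?_⟩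
  calc mgf X μ t ≤ ∫ ω, 1 + t * X ω + t ^ 2 * X ω ^ 2 ∂μ := by
        refine integral_mono_ae (hint_exp t) (by fun_prop) (hbound.mono fun ω h => ?_)
        have htX : |t * X ω| ≤ 1 := by
          rw [abs_mul]
          exact mul_le_one₀ (by simpa using ht) (abs_nonneg _) h
        have hexp := (abs_le.1 (Real.abs_exp_sub_one_sub_id_le htX)).2
        linarith [mul_pow t (X ω) 2]
    _ = 1 + t ^ 2 * ∫ ω, X ω ^ 2 ∂μ := by
        rw [integral_add (by fun_prop) (by fun_prop), integral_add (by fun_prop) (by fun_prop),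
          integral_const_mul, integral_const_mul, hmean]
        simp
    _ ≤ v * t ^ 2 + 1 := by nlinarith [sq_nonneg t]
    _ ≤ Real.exp (v * t ^ 2) := Real.add_one_le_exp _

lemma integral_sq_le_of_mem_Icc (hX : AEMeasurable X μ) (hmem : ∀ᵐ ω ∂μ, X ω ∈ Set.Icc (-p) 1)
    (hmean : ∫ ω, X ω ∂μ = 0) : ∫ ω, X ω ^ 2 ∂μ ≤ p := by
  have hint : Integrable X μ := .of_mem_Icc (-p) 1 hX hmem
  calc ∫ ω, X ω ^ 2 ∂μ ≤ ∫ ω, (1 - p) * X ω + p ∂μ := by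
        refine integral_mono_of_nonneg (.of_forall fun ω => sq_nonneg _) (by fun_prop)
          (hmem.mono fun ω h => ?_)
        change X ω ^ 2 ≤ (1 - p) * X ω + p
        nlinarith [mul_nonneg (by linarith [h.1] : 0 ≤ X ω + p) (sub_nonneg.2 h.2)]
    _ = p := by
        rw [integral_add (by fun_prop) (by fun_prop), integral_const_mul, hmean]
        simp

namespace HasBernsteinMGF

lemma sum_of_iIndepFun {X : ι → Ω → ℝ} {v : ι → ℝ} {s : Finset ι} (hindep : iIndepFun X μ)
    (hX : ∀ i, Measurable (X i)) (h : ∀ i ∈ s, HasBernsteinMGF (X i) (v i) S μ) :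
    HasBernsteinMGF (∑ i ∈ s, X i) (∑ i ∈ s, v i) S μ where
  integrable_exp_mul t ht :=
    hindep.integrable_exp_mul_sum hX fun i hi => (h i hi).integrable_exp_mul t ht
  mgf_le t ht := by
    rw [hindep.mgf_sum hX, Finset.sum_mul, Real.exp_sum]
    exact Finset.prod_le_prod (fun _ _ => mgf_nonneg) fun i hi => (h i hi).mgf_le t ht

lemma measureReal_abs_ge_le (h : HasBernsteinMGF X v S μ) (hS : 0 < S) (ε : ℝ) :
    μ.real {ω | ε ≤ |X ω|} ≤ 2 * Real.exp (v / S ^ 2 - ε / S) := by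
  have hscale : |S⁻¹| * S ≤ 1 := by rw [abs_of_pos (inv_pos.2 hS), inv_mul_cancel₀ hS.ne']
  have hscale' : |-S⁻¹| * S ≤ 1 := by rwa [abs_neg]
  have hupper : μ.real {ω | ε ≤ X ω} ≤ Real.exp (v / S ^ 2 - ε / S) :=
    calc μ.real {ω | ε ≤ X ω} ≤ Real.exp (-S⁻¹ * ε) * mgf X μ S⁻¹ :=
          measure_ge_le_exp_mul_mgf ε (by positivity) (h.integrable_exp_mul _ hscale)
      _ ≤ Real.exp (-S⁻¹ * ε) * Real.exp (v * S⁻¹ ^ 2) := by gcongr; exact h.mgf_le _ hscale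
      _ = Real.exp (v / S ^ 2 - ε / S) := by rw [← Real.exp_add]; ring_nf
  have hlower : μ.real {ω | X ω ≤ -ε} ≤ Real.exp (v / S ^ 2 - ε / S) :=
    calc μ.real {ω | X ω ≤ -ε} ≤ Real.exp (-(-S⁻¹) * -ε) * mgf X μ (-S⁻¹) :=
          measure_le_le_exp_mul_mgf (-ε) (by simpa using hS.le) (h.integrable_exp_mul _ hscale')
      _ ≤ Real.exp (-(-S⁻¹) * -ε) * Real.exp (v * (-S⁻¹) ^ 2) := by
          gcongr; exact h.mgf_le _ hscale'
      _ = Real.exp (v / S ^ 2 - ε / S) := by rw [← Real.exp_add]; ring_nf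
  calc μ.real {ω | ε ≤ |X ω|} ≤ μ.real ({ω | ε ≤ X ω} ∪ {ω | X ω ≤ -ε}) :=
        measureReal_mono fun ω (hω : ε ≤ |X ω|) => (le_abs.1 hω).imp_right le_neg.1
    _ ≤ μ.real {ω | ε ≤ X ω} + μ.real {ω | X ω ≤ -ε} := measureReal_union_le _ _
    _ ≤ 2 * Real.exp (v / S ^ 2 - ε / S) := by linarith

end HasBernsteinMGF

lemma measure_le_of_indepFun {α β : Type*} [MeasurableSpace α] [MeasurableSpace β] {X : Ω → α}
    {Y : Ω → β} {B : Set (α × β)} {c : ENNReal} (hX : Measurable X) (hY : Measurable Y)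
    (hXY : IndepFun X Y μ) (hB : MeasurableSet B) (h : ∀ y, μ {ω | (X ω, y) ∈ B} ≤ c) :
    μ {ω | (X ω, Y ω) ∈ B} ≤ c := by
  have : IsProbabilityMeasure (μ.map Y) := Measure.isProbabilityMeasure_map hY.aemeasurable
  calc μ {ω | (X ω, Y ω) ∈ B} = ((μ.map X).prod (μ.map Y)) B := by
        rw [← (indepFun_iff_map_prod_eq_prod_map_map hX.aemeasurable hY.aemeasurable).1 hXY,
          Measure.map_apply (hX.prodMk hY) hB]
        rfl
    _ = ∫⁻ y, μ {ω | (X ω, y) ∈ B} ∂μ.map Y := by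
        rw [Measure.prod_apply_symm hB]
        refine lintegral_congr fun y => ?_
        rw [Measure.map_apply hX (hB.preimage measurable_prodMk_right)]
        rfl
    _ ≤ ∫⁻ _, c ∂μ.map Y := lintegral_mono h
    _ = c := by simp

end Bernstein

section MeasurableAvoiding

variable {V Ω : Type*} [Fintype V] [DecidableEq V] [MeasurableSpace Ω]

lemma measurable_avoiding {E : Ω → Matrix V V ℝ} (hE : ∀ u v, Measurable fun ω => E ω u v) (u : V)
    (x : V → ℝ) (j : ℕ) : Measurable fun ω => avoiding (E ω) u x j := by
  refine measurable_pi_lambda _ fun v => ?_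
  induction j generalizing v with
  | zero => exact measurable_const
  | succ j ih =>
    by_cases hv : v = u
    · simpa only [hv, avoiding_self] using measurable_const
    · simp only [avoiding, Function.update_of_ne hv, mulVec, dotProduct]
      exact Finset.measurable_sum _ fun w _ => (hE v w).mul (ih w)

end MeasurableAvoiding

section Noise

variable {V Ω : Type*} [LinearOrder V] [MeasurableSpace Ω] {μ : Measure Ω}
  {E : Ω → Matrix V V ℝ} {p L S b β : ℝ}

/-- A random symmetric matrix whose entries on and above the diagonal are independent, centred and
take values in `[-p, 1]`, so that their variances are at most `p`. -/
structure IsCenteredNoise (E : Ω → Matrix V V ℝ) (p : ℝ) (μ : Measure Ω) : Prop where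
  isSymm : ∀ ω, (E ω).IsSymm
  measurable_apply : ∀ u v, Measurable fun ω => E ω u v
  indep : iIndepFun (fun (e : {e : V × V // e.1 ≤ e.2}) ω => E ω e.1.1 e.1.2) μ
  mem_Icc : ∀ᵐ ω ∂μ, ∀ u v, E ω u v ∈ Set.Icc (-p) 1
  integral_eq_zero : ∀ u v, ∫ ω, E ω u v ∂μ = 0

/-- The position on or above the diagonal that carries the same entry of a symmetric matrix as the
position `(u, v)`. -/
def upperIndex (u v : V) : {e : V × V // e.1 ≤ e.2} := ⟨(min u v, max u v), min_le_max⟩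

lemma upperIndex_eq_iff {u v w x : V} :
    upperIndex u v = upperIndex w x ↔ u = w ∧ v = x ∨ u = x ∧ v = w := by
  simp only [upperIndex, Subtype.mk.injEq, Prod.mk.injEq]
  grind

lemma apply_upperIndex {M : Matrix V V ℝ} (hM : M.IsSymm) (u v : V) :
    M (upperIndex u v).1.1 (upperIndex u v).1.2 = M u v := by
  rcases le_total u v with h | h
  · simp [upperIndex, h]
  · simpa [upperIndex, h] using hM.apply u v

namespace IsCenteredNoise

lemma iIndepFun_row (hE : IsCenteredNoise E p μ) (u : V) : iIndepFun (fun v ω => E ω u v) μ := by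
  have hinj : Function.Injective (upperIndex u) := fun v w h => by
    rcases upperIndex_eq_iff.1 h with h | h
    · exact h.2
    · exact h.2.trans h.1
  simpa only [apply_upperIndex (hE.isSymm _)] using hE.indep.precomp hinj

lemma hasBernsteinMGF_apply [IsProbabilityMeasure μ] (hE : IsCenteredNoise E p μ)
    (hp : p ≤ 1) (u v : V) : HasBernsteinMGF (fun ω => E ω u v) p 1 μ := by
  have hmeas := (hE.measurable_apply u v).aemeasurable (μ := μ)
  refine hasBernsteinMGF_of_abs_le_one hmeas ?_ (hE.integral_eq_zero u v)
    (integral_sq_le_of_mem_Icc hmeas (hE.mem_Icc.mono fun ω h => h u v) (hE.integral_eq_zero u v))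
  exact hE.mem_Icc.mono fun ω h => abs_le.2 ⟨by linarith [(h u v).1], (h u v).2⟩

variable [Fintype V]

lemma indepFun_row_avoiding (hE : IsCenteredNoise E p μ) (u : V) (x : V → ℝ) (j : ℕ) :
    IndepFun (fun ω => E ω u) (fun ω => avoiding (E ω) u x j) μ := by
  let row : Finset {e : V × V // e.1 ≤ e.2} := univ.image (upperIndex u)
  have mem_row (v : V) : upperIndex u v ∈ row := mem_image_of_mem _ (mem_univ v)
  have mem_compl_row (v w : V) (hv : v ≠ u) (hw : w ≠ u) : upperIndex v w ∈ rowᶜ := by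
    simp only [row, mem_compl, mem_image, mem_univ, true_and, upperIndex_eq_iff]
    grind
  let minor (f : (rowᶜ : Finset _) → ℝ) : Matrix V V ℝ := fun v w =>
    if h : upperIndex v w ∈ rowᶜ then f ⟨upperIndex v w, h⟩ else 0
  have measurable_minor (v w : V) : Measurable fun f => minor f v w := by
    unfold minor
    split_ifs
    exacts [measurable_pi_apply _, measurable_const]
  have hrow : Measurable fun (f : row → ℝ) v => f ⟨upperIndex u v, mem_row v⟩ :=
    measurable_pi_lambda _ fun v => measurable_pi_apply _
  have hindep := (hE.indep.indepFun_finset row rowᶜ disjoint_compl_right fun e =>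
    hE.measurable_apply _ _).comp hrow (measurable_avoiding measurable_minor u x j)
  convert hindep using 1
  · ext ω v
    exact (apply_upperIndex (hE.isSymm ω) u v).symm
  · refine funext fun ω => avoiding_congr (fun v w hv hw => ?_) x j
    simp only [minor, mem_compl_row v w hv hw, dite_true]
    exact (apply_upperIndex (hE.isSymm ω) v w).symm

variable [IsProbabilityMeasure μ]

lemma hasBernsteinMGF_row_dotProduct (hE : IsCenteredNoise E p μ) (hp : p ≤ 1) (u : V)
    {y : V → ℝ} (hy : ∀ v, |y v| ≤ S) :
    HasBernsteinMGF (fun ω => E ω u ⬝ᵥ y) (p * ∑ v, y v ^ 2) S μ := by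
  have hindep := (hE.iIndepFun_row u).comp (fun v t => y v * t) fun v => by fun_prop
  convert HasBernsteinMGF.sum_of_iIndepFun (s := univ) hindep
    (fun v => (hE.measurable_apply u v).const_mul (y v))
    (fun v _ => (hE.hasBernsteinMGF_apply hp u v).const_mul (by simpa using hy v)) using 1
  · ext ω
    simp [dotProduct, mul_comm]
  · rw [Finset.mul_sum]
    simp only [mul_comm]

lemma measure_not_bernsteinEvent_le (hE : IsCenteredNoise E p μ) (hp : p ≤ 1) (hS : 0 < S) (u : V)
    (x : V → ℝ) (j : ℕ) :
    μ.real {ω | ¬ BernsteinEvent (E ω) u x p L S j} ≤ 2 * Real.exp (-(7 * L)) := by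
  let bad : Set ((V → ℝ) × (V → ℝ)) := {z | (∀ v, |z.2 v| ≤ S) ∧
    p * ∑ v, z.2 v ^ 2 ≤ L * S ^ 2 ∧ 8 * L * S < |z.1 ⬝ᵥ z.2|}
  have measurableSet_bad : MeasurableSet bad := by
    have hdot : Measurable fun z : (V → ℝ) × (V → ℝ) => z.1 ⬝ᵥ z.2 := by
      unfold dotProduct
      fun_prop
    exact measurableSet_setOfPred.2 <| .and (.forall fun v => measurableSet_setOfPred.1 <|
      measurableSet_le (by fun_prop) measurable_const) <|
      .and (measurableSet_setOfPred.1 <| measurableSet_le (by fun_prop) measurable_const)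
        (measurableSet_setOfPred.1 <| measurableSet_lt measurable_const hdot.abs)
  have hfixed (y : V → ℝ) :
      μ {ω | (E ω u, y) ∈ bad} ≤ ENNReal.ofReal (2 * Real.exp (-(7 * L))) := by
    by_cases hy : (∀ v, |y v| ≤ S) ∧ p * ∑ v, y v ^ 2 ≤ L * S ^ 2
    · rw [← ofReal_measureReal]
      refine ENNReal.ofReal_le_ofReal ?_
      calc μ.real {ω | (E ω u, y) ∈ bad} ≤ μ.real {ω | 8 * L * S ≤ |E ω u ⬝ᵥ y|} :=
            measureReal_mono fun ω hω => hω.2.2.le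
        _ ≤ 2 * Real.exp ((p * ∑ v, y v ^ 2) / S ^ 2 - 8 * L * S / S) :=
            (hE.hasBernsteinMGF_row_dotProduct hp u hy.1).measureReal_abs_ge_le hS _
        _ ≤ 2 * Real.exp (-(7 * L)) := by
            have hvar : (p * ∑ v, y v ^ 2) / S ^ 2 ≤ L := (div_le_iff₀ (by positivity)).2 hy.2
            rw [mul_div_cancel_right₀ _ hS.ne']
            gcongr
            linarith
    · rw [show {ω | (E ω u, y) ∈ bad} = ∅ from
        Set.eq_empty_of_forall_notMem fun ω hω => hy ⟨hω.1, hω.2.1⟩, measure_empty]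
      exact zero_le
  rw [← ENNReal.ofReal_le_ofReal_iff (by positivity), ofReal_measureReal]
  refine (measure_mono fun ω hω => ?_).trans <| measure_le_of_indepFun
    (measurable_pi_lambda _ (hE.measurable_apply u)) (measurable_avoiding hE.measurable_apply u x j)
    (hE.indepFun_row_avoiding u x j) measurableSet_bad hfixed
  simpa [BernsteinEvent, escape, mulVec, bad] using hω

theorem measureReal_not_isConcentrated_le (hE : IsCenteredNoise E p μ) (hp : p ≤ 1) (hL : 0 < L)
    (hb : 0 < b) (hβ : 0 < β) (J : ℕ) (𝒜 : Finset (Finset V)) :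
    μ.real {ω | ¬ IsConcentrated (E ω) p L b β J 𝒜} ≤
      #𝒜 * ((J + 1) * (Fintype.card V * (2 * Real.exp (-(7 * L))))) := by
  let failure (A : Finset V) (j : ℕ) (u : V) : Set Ω :=
    {ω | ¬ BernsteinEvent (E ω) u (charVec A) p L (walkScale L b β (setScale p A) j) j}
  have hcover : {ω | ¬ IsConcentrated (E ω) p L b β J 𝒜} ⊆
      ⋃ A ∈ 𝒜, ⋃ j ∈ range (J + 1), ⋃ u, failure A j u := fun ω hω => by
    simp only [IsConcentrated, Set.mem_ofPred_eq] at hω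
    push Not at hω
    obtain ⟨A, hA, j, hj, u, hu⟩ := hω
    simp only [Set.mem_iUnion, mem_range]
    exact ⟨A, hA, j, by omega, u, hu⟩
  calc μ.real {ω | ¬ IsConcentrated (E ω) p L b β J 𝒜}
      ≤ ∑ A ∈ 𝒜, ∑ j ∈ range (J + 1), ∑ u, μ.real (failure A j u) := by
        refine (measureReal_mono hcover (measure_ne_top _ _)).trans <|
          (measureReal_biUnion_finset_le _ _).trans <|
          Finset.sum_le_sum fun A _ => (measureReal_biUnion_finset_le _ _).trans <|
          Finset.sum_le_sum fun j _ => measureReal_iUnion_fintype_le _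
    _ ≤ ∑ A ∈ 𝒜, ∑ j ∈ range (J + 1), ∑ u : V, 2 * Real.exp (-(7 * L)) := by
        gcongr with A _ j _ u
        exact hE.measure_not_bernsteinEvent_le hp
          (walkScale_pos hL hb hβ (zero_lt_one.trans_le (one_le_setScale p A)) j) u _ j
    _ = #𝒜 * ((J + 1) * (Fintype.card V * (2 * Real.exp (-(7 * L))))) := by simp

end IsCenteredNoise

end Noise

section NoiseModel

lemma meanMatrix_comm {n k : ℕ} (p q : ℝ) (cl : Fin n → Fin k) (u v : Fin n) :
    meanMatrix n k p q cl u v = meanMatrix n k p q cl v u := by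
  simp only [meanMatrix, of_apply, eq_comm]

lemma meanMatrix_mem_Icc {n k : ℕ} {p q : ℝ} (hq : 0 ≤ q) (hqp : q ≤ p) (cl : Fin n → Fin k)
    (u v : Fin n) : meanMatrix n k p q cl u v ∈ Set.Icc 0 p := by
  simp only [meanMatrix, of_apply]
  split_ifs
  exacts [⟨hq.trans hqp, le_rfl⟩, ⟨hq, hqp⟩]

/-- The law of `X - g`, where `X` is a Bernoulli variable with mean `g`. -/
noncomputable def centeredBernoulli (g : ℝ) : Measure ℝ :=
  ENNReal.ofReal g • Measure.dirac (1 - g) + ENNReal.ofReal (1 - g) • Measure.dirac (-g)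

lemma centeredBernoulli_ae_mem_Icc {g : ℝ} (hg : 0 ≤ g) :
    ∀ᵐ t ∂centeredBernoulli g, t ∈ Set.Icc (-g) 1 := by
  rw [centeredBernoulli, ae_add_measure_iff]
  constructor <;> refine Measure.ae_smul_measure ((ae_dirac_iff measurableSet_Icc).2 ?_) _
  exacts [⟨by linarith, by linarith⟩, ⟨le_rfl, by linarith⟩]

lemma integral_id_centeredBernoulli {g : ℝ} (hg : 0 ≤ g) (hg1 : g ≤ 1) :
    ∫ t, t ∂centeredBernoulli g = 0 := by
  have hint (c : ENNReal) (hc : c ≠ ⊤) (a : ℝ) :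
      Integrable (fun t : ℝ => t) (c • Measure.dirac a) :=
    (integrable_dirac (by finiteness)).smul_measure hc
  rw [centeredBernoulli, integral_add_measure (hint _ ENNReal.ofReal_ne_top _)
    (hint _ ENNReal.ofReal_ne_top _), integral_smul_measure, integral_smul_measure, integral_dirac,
    integral_dirac, ENNReal.toReal_ofReal hg, ENNReal.toReal_ofReal (sub_nonneg.2 hg1)]
  simp only [smul_eq_mul]
  ring

lemma NoiseModel.isCenteredNoise {Ω : Type*} [MeasureSpace Ω] {n k : ℕ} {p q : ℝ}
    {cl : Fin n → Fin k} {E : Ω → Matrix (Fin n) (Fin n) ℝ} (hE : NoiseModel p q cl E) (hq : 0 ≤ q)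
    (hqp : q ≤ p) (hp : p ≤ 1) : IsCenteredNoise E p ℙ := by
  obtain ⟨hsymm, hmeas, hindep, hlaw⟩ := hE
  have law (u v : Fin n) : Measure.map (fun ω => E ω u v) ℙ =
      centeredBernoulli (meanMatrix n k p q cl u v) := by
    rcases le_total u v with h | h
    · exact hlaw u v h
    · simp only [(hsymm _).apply v u, meanMatrix_comm p q cl u v]
      exact hlaw v u h
  have hmean (u v : Fin n) := meanMatrix_mem_Icc hq hqp cl u v
  refine ⟨hsymm, hmeas, hindep, ?_, fun u v => ?_⟩
  · refine ae_all_iff.2 fun u => ae_all_iff.2 fun v => ?_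
    have hae := centeredBernoulli_ae_mem_Icc (hmean u v).1
    rw [← law u v] at hae
    exact (ae_of_ae_map (hmeas u v).aemeasurable hae).mono fun ω h =>
      Set.Icc_subset_Icc_left (neg_le_neg (hmean u v).2) h
  · rw [← integral_id_centeredBernoulli (hmean u v).1 ((hmean u v).2.trans hp), ← law u v,
      integral_map (hmeas u v).aemeasurable (by fun_prop)]

end NoiseModel

section MatrixPerturbation

open scoped Matrix.Norms.L2Operator

lemma enorm_phiM_add_sub_phiM_mulVec_le {n : ℕ} {G E P : Matrix (Fin n) (Fin n) ℝ} {w : Fin n → ℝ}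
    {lam mu δ ε β M : ℝ} (hmu : 0 < mu) (hlam : mu ≤ lam) (hG : ‖G‖ ≤ lam) (hGP : G * P = G)
    (hδ : 0 ≤ δ) (hδ1 : δ ≤ 1) (hψ : ‖psi lam mu G‖ ≤ 1 + δ) (hε : ε ≤ 1 / 10) (hE : ‖E‖ ≤ ε * mu)
    (hβ : 0 ≤ β) (hβε : β ≤ ε * mu) {r : ℕ} (hr : r ≠ 0)
    (hP : ∀ m ≤ 2 * r, SBM.enorm (P *ᵥ (E ^ m *ᵥ w)) ≤ M * β ^ m) :
    SBM.enorm ((phiM lam mu r (G + E) - phiM lam mu r G) *ᵥ w) ≤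
      7 * M * (1 + δ + 5 * ε) ^ r + (3 * ε) ^ r * SBM.enorm w := by
  let f : Matrix (Fin n) (Fin n) ℝ →ₐ[ℝ] EuclideanSpace ℝ (Fin n) →L[ℝ] EuclideanSpace ℝ (Fin n) :=
    AlgHomClass.toAlgHom (toEuclideanCLM (n := Fin n) (𝕜 := ℝ))
  have happly (A : Matrix (Fin n) (Fin n) ℝ) (x : Fin n → ℝ) :
      f A (WithLp.toLp 2 x) = WithLp.toLp 2 (A *ᵥ x) := toEuclideanCLM_toLp A x
  have key := norm_psi_pow_sub_psi_pow_apply_le (G := f G) (E := f E) (P := f P)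
    (w := WithLp.toLp 2 w) (M := M) hmu hlam hG (by rw [← map_mul, hGP]) hδ hδ1
    (by rw [← map_psi]; exact hψ) hε hE hβ hβε hr (fun m hm => by
      rw [← map_pow, happly, happly, ← enorm_eq_norm]; exact hP m hm)
  rwa [← map_add, ← map_psi, ← map_psi, ← map_pow, ← map_pow, ← map_sub, happly, ← enorm_eq_norm,
    ← enorm_eq_norm] at key

end MatrixPerturbation

section StrongSignal

variable {n k : ℕ} {p q : ℝ}

/-- The quantitative hypotheses of the theorem: the signal `p - q` dominates the noise. -/
structure StrongSignal (n k : ℕ) (p q : ℝ) : Prop where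
  two_le_n : 2 ≤ n
  k_pos : 0 < k
  q_nonneg : 0 ≤ q
  q_lt_p : q < p
  p_le_one : p ≤ 1
  le_n : 10 ^ 10 * (k : ℝ) ^ 2 * p * Real.log n ^ 12 / (p - q) ^ 2 ≤ n

/-- The standard deviation of a sum of `n` entries of variance `p`. -/
noncomputable def rowScale (n : ℕ) (p : ℝ) : ℝ := √(n * p)

/-- The growth rate of the powers of the noise matrix, larger than its norm by a logarithmic
factor. -/
noncomputable def powScale (n : ℕ) (p : ℝ) : ℝ := 96 * Real.log n ^ 2 * rowScale n p

namespace StrongSignal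

lemma n_pos (h : StrongSignal n k p q) : (0 : ℝ) < n := Nat.cast_pos.2 (by linarith [h.two_le_n])

lemma one_le_k (h : StrongSignal n k p q) : (1 : ℝ) ≤ k := Nat.one_le_cast.2 h.k_pos

lemma p_pos (h : StrongSignal n k p q) : 0 < p := h.q_nonneg.trans_lt h.q_lt_p

lemma sq_rowScale (h : StrongSignal n k p q) : rowScale n p ^ 2 = n * p :=
  Real.sq_sqrt (mul_nonneg n.cast_nonneg h.p_pos.le)

lemma mul_log_pow_le_mul_sq (h : StrongSignal n k p q) :
    10 ^ 10 * (k : ℝ) ^ 2 * p * Real.log n ^ 12 ≤ n * (p - q) ^ 2 :=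
  (div_le_iff₀ (pow_pos (sub_pos.2 h.q_lt_p) 2)).1 h.le_n

lemma sq_mul_log_pow_le (h : StrongSignal n k p q) : (10 ^ 5 * k * Real.log n ^ 6) ^ 2 ≤ n * p := by
  have hp := h.p_pos
  have hq := h.q_nonneg
  have hpq : (p - q) ^ 2 ≤ p ^ 2 := by nlinarith [h.q_lt_p]
  refine le_of_mul_le_mul_right ?_ hp
  calc _ = 10 ^ 10 * (k : ℝ) ^ 2 * p * Real.log n ^ 12 := by ring
    _ ≤ n * (p - q) ^ 2 := h.mul_log_pow_le_mul_sq
    _ ≤ n * p ^ 2 := by gcongr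
    _ = n * p * p := by ring

-- Bootstrap: `log n ≥ log 2` gives `n ≥ 10 ^ 10 * (log 2) ^ 12`, which is far above `e ^ 2`.
lemma two_le_log (h : StrongSignal n k p q) : 2 ≤ Real.log n := by
  have hlog : (0.6 : ℝ) ≤ Real.log n :=
    (by linarith [Real.log_two_gt_d9] : 0.6 ≤ Real.log 2).trans
      (Real.log_le_log two_pos (Nat.ofNat_le_cast.2 h.two_le_n))
  have h8 : (8 : ℝ) ≤ n := by
    calc (8 : ℝ) ≤ (10 ^ 5 * 1 * 0.6 ^ 6) ^ 2 := by norm_num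
      _ ≤ (10 ^ 5 * k * Real.log n ^ 6) ^ 2 := by gcongr; exact h.one_le_k
      _ ≤ n * p := h.sq_mul_log_pow_le
      _ ≤ n := mul_le_of_le_one_right n.cast_nonneg h.p_le_one
  have hlog8 : Real.log 8 = 3 * Real.log 2 := by
    rw [show (8 : ℝ) = 2 ^ 3 by norm_num, Real.log_pow]; norm_num
  linarith [Real.log_le_log (by norm_num) h8, Real.log_two_gt_d9]

lemma mul_log_pow_le_rowScale (h : StrongSignal n k p q) :
    10 ^ 5 * k * Real.log n ^ 6 ≤ rowScale n p :=
  Real.le_sqrt_of_sq_le h.sq_mul_log_pow_le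

lemma mul_rowScale_le_gap (h : StrongSignal n k p q) :
    10 ^ 5 * Real.log n ^ 6 * rowScale n p ≤ (p - q) * ((n : ℝ) / k) := by
  have hk : (0 : ℝ) < k := one_pos.trans_le h.one_le_k
  have hpq : 0 < p - q := sub_pos.2 h.q_lt_p
  refine le_of_sq_le_sq ?_ (by positivity)
  calc (10 ^ 5 * Real.log n ^ 6 * rowScale n p) ^ 2
      = n * (10 ^ 10 * (k : ℝ) ^ 2 * p * Real.log n ^ 12) / k ^ 2 := by
        rw [mul_pow, h.sq_rowScale]; field_simp
    _ ≤ n * (n * (p - q) ^ 2) / k ^ 2 := by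
        refine div_le_div_of_nonneg_right ?_ (by positivity)
        exact mul_le_mul_of_nonneg_left h.mul_log_pow_le_mul_sq n.cast_nonneg
    _ = _ := by field_simp

lemma ceil_log_ne_zero (h : StrongSignal n k p q) : ⌈Real.log n⌉₊ ≠ 0 :=
  (Nat.ceil_pos.2 (by linarith [h.two_le_log])).ne'

lemma ceil_log_le (h : StrongSignal n k p q) : (⌈Real.log n⌉₊ : ℝ) ≤ Real.log n + 1 :=
  (Nat.ceil_lt_add_one (by linarith [h.two_le_log])).le

lemma walkRegime (h : StrongSignal n k p q) :
    WalkRegime (Fin n) p (Real.log n) (rowScale n p) (powScale n p) (2 * ⌈Real.log n⌉₊) where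
  p_nonneg := h.p_pos.le
  p_le_one := h.p_le_one
  one_le_L := by linarith [h.two_le_log]
  ten_mul_L_le := by
    have hL := h.two_le_log
    refine le_trans ?_ h.mul_log_pow_le_rowScale
    calc 10 * Real.log n ≤ 10 ^ 5 * 1 * Real.log n := by linarith
      _ ≤ 10 ^ 5 * k * Real.log n ^ 6 := by
        gcongr
        · exact h.one_le_k
        · exact le_self_pow₀ (by linarith) (by norm_num)
  sq_b := by rw [h.sq_rowScale, Fintype.card_fin]
  length_mul_le := by
    have hL := h.two_le_log
    refine mul_le_mul_of_nonneg_right ?_ (Real.sqrt_nonneg _)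
    push_cast
    nlinarith [h.ceil_log_le]
  bernstein_le := by
    refine mul_le_mul_of_nonneg_right ?_ (Real.sqrt_nonneg _)
    nlinarith [h.two_le_log]

lemma three_mul_powScale_le (h : StrongSignal n k p q) :
    3 * powScale n p ≤ 1 / (100 * Real.log n) * ((p - q) * ((n : ℝ) / k)) := by
  have hL := h.two_le_log
  have hb : 0 ≤ rowScale n p := Real.sqrt_nonneg _
  have hL6 : Real.log n ^ 3 ≤ Real.log n ^ 6 := pow_le_pow_right₀ (by linarith) (by norm_num)
  rw [one_div_mul_eq_div, le_div_iff₀ (by positivity)]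
  calc 3 * powScale n p * (100 * Real.log n) = 28800 * Real.log n ^ 3 * rowScale n p := by
        rw [powScale]; ring
    _ ≤ 10 ^ 5 * Real.log n ^ 6 * rowScale n p := by gcongr; norm_num
    _ ≤ _ := h.mul_rowScale_le_gap

lemma one_add_noise_pow_le (h : StrongSignal n k p q) :
    (1 + 1 / (16 * Real.log n) + 5 * (1 / (100 * Real.log n))) ^ ⌈Real.log n⌉₊ ≤ 3 := by
  have hL := h.two_le_log
  have hL0 : 0 < Real.log n := by linarith
  calc _ ≤ Real.exp (1 / (2 * Real.log n)) ^ ⌈Real.log n⌉₊ := by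
        gcongr
        refine le_trans ?_ (Real.add_one_le_exp _)
        have := inv_pos.2 hL0
        simp only [one_div, mul_inv]
        linarith
    _ = Real.exp (⌈Real.log n⌉₊ * (1 / (2 * Real.log n))) := (Real.exp_nat_mul _ _).symm
    _ ≤ Real.exp 1 := by
        gcongr
        rw [mul_one_div, div_le_one (by positivity)]
        linarith [h.ceil_log_le]
    _ ≤ 3 := Real.exp_one_lt_three.le

lemma noise_pow_mul_le (h : StrongSignal n k p q) :
    (3 * (1 / (100 * Real.log n))) ^ ⌈Real.log n⌉₊ * n ≤ 1 / Real.log n := by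
  have hL := h.two_le_log
  have hbase : 3 * (1 / (100 * Real.log n)) ≤ Real.exp (-2) := by
    calc 3 * (1 / (100 * Real.log n)) ≤ 3 * (1 / (100 * 2)) := by gcongr
      _ ≤ (1 / 3) ^ 2 := by norm_num
      _ ≤ Real.exp (-1) ^ 2 := by
          gcongr
          rw [Real.exp_neg, ← one_div]
          exact one_div_le_one_div_of_le (Real.exp_pos 1) Real.exp_one_lt_three.le
      _ = Real.exp (-2) := by rw [← Real.exp_nat_mul]; norm_num
  calc _ ≤ Real.exp (-2) ^ ⌈Real.log n⌉₊ * Real.exp (Real.log n) := by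
        rw [Real.exp_log h.n_pos]; gcongr
    _ = Real.exp (⌈Real.log n⌉₊ * (-2) + Real.log n) := by rw [Real.exp_add, Real.exp_nat_mul]
    _ ≤ Real.exp (-Real.log n) := by gcongr; linarith [Nat.le_ceil (Real.log n)]
    _ = 1 / Real.exp (Real.log n) := by rw [Real.exp_neg, one_div]
    _ ≤ 1 / Real.log n := by gcongr; linarith [Real.add_one_le_exp (Real.log n)]

lemma le_three_pow_ceil_log (h : StrongSignal n k p q) : (n : ℝ) ≤ 3 ^ ⌈Real.log n⌉₊ := by
  calc (n : ℝ) = Real.exp (Real.log n) := (Real.exp_log h.n_pos).symm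
    _ ≤ Real.exp ⌈Real.log n⌉₊ := by gcongr; exact Nat.le_ceil _
    _ = Real.exp 1 ^ ⌈Real.log n⌉₊ := by rw [← Real.exp_nat_mul, mul_one]
    _ ≤ _ := by gcongr; exact Real.exp_one_lt_three.le

lemma one_le_div_mul (h : StrongSignal n k p q) : 1 ≤ (n : ℝ) / (2 * k) * p := by
  have hk := h.one_le_k
  have hb := h.walkRegime.one_le_b
  have hL6 : 1 ≤ Real.log n ^ 6 := one_le_pow₀ (by linarith [h.two_le_log])
  rw [div_mul_eq_mul_div, one_le_div (by positivity), ← h.sq_rowScale]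
  calc 2 * (k : ℝ) ≤ 10 ^ 5 * k * 1 := by linarith
    _ ≤ 10 ^ 5 * k * Real.log n ^ 6 := by gcongr
    _ ≤ rowScale n p := h.mul_log_pow_le_rowScale
    _ ≤ rowScale n p ^ 2 := le_self_pow₀ hb two_ne_zero

lemma div_le_clusterSize (h : StrongSignal n k p q) {cl : Fin n → Fin k} (hbal : Balanced n k cl)
    (c : Fin k) : (n : ℝ) / (2 * k) ≤ clusterSize cl c := by
  have hL := h.two_le_log
  have hinv : 1 / (16 * Real.log n) ≤ 1 / 2 := by gcongr; linarith
  calc (n : ℝ) / (2 * k) = (1 - 1 / 2) * (n / k) := by ring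
    _ ≤ (1 - 1 / (16 * Real.log n)) * (n / k) := by gcongr
    _ ≤ _ := (hbal c).1

lemma k_le_n (h : StrongSignal n k p q) {cl : Fin n → Fin k} (hbal : Balanced n k cl) : k ≤ n := by
  have hsurj : Function.Surjective cl := fun c => by
    have hk : (0 : ℝ) < k := one_pos.trans_le h.one_le_k
    have hpos : 0 < #(cluster cl c) := Nat.cast_pos.1 <|
      (div_pos h.n_pos (by positivity)).trans_le (h.div_le_clusterSize hbal c)
    obtain ⟨v, hv⟩ := Finset.card_pos.1 hpos
    exact ⟨v, mem_cluster.1 hv⟩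
  simpa using Fintype.card_le_of_surjective cl hsurj

end StrongSignal

end StrongSignal

section ConcentratedNoise

variable {n k : ℕ} {p q : ℝ} {cl : Fin n → Fin k} {E : Matrix (Fin n) (Fin n) ℝ}

/-- The vertex sets along which the noise has to concentrate: all vertices and single vertices
control the norm of the noise, the clusters control its interaction with the mean matrix. -/
def testSets (cl : Fin n → Fin k) : Finset (Finset (Fin n)) :=
  insert univ (univ.image (fun u => {u}) ∪ univ.image (cluster cl))

lemma card_testSets_le (cl : Fin n → Fin k) : #(testSets cl) ≤ n + k + 1 := by
  refine (card_insert_le _ _).trans (Nat.succ_le_succ ((card_union_le _ _).trans ?_))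
  gcongr <;> exact card_image_le.trans_eq (Finset.card_fin _)

lemma sum_pow_mulVec_column (hE : E.IsSymm) (m : ℕ) (A : Finset (Fin n)) (u : Fin n) :
    ∑ v ∈ A, (E ^ m *ᵥ column E u) v = (E ^ (m + 1) *ᵥ charVec A) u := by
  have hcol : E ^ m *ᵥ column E u = (E ^ (m + 1)).col u := by
    rw [← mulVec_single_one, pow_succ, ← mulVec_mulVec, mulVec_single_one]; rfl
  rw [← charVec_dotProduct, hcol, mulVec, dotProduct_comm]
  congr 1
  ext v
  exact (hE.pow (m + 1)).apply u v

lemma enorm_column_le (hE : ∀ u v, |E u v| ≤ 1) (u : Fin n) : SBM.enorm (column E u) ≤ n := by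
  refine Real.sqrt_le_iff.2 ⟨n.cast_nonneg, ?_⟩
  calc ∑ v, column E u v ^ 2 ≤ ∑ _v : Fin n, (1 : ℝ) :=
        Finset.sum_le_sum fun v _ => (sq_le_one_iff_abs_le_one _).2 (hE v u)
    _ = n := by simp
    _ ≤ (n : ℝ) ^ 2 := mod_cast Nat.le_self_pow two_ne_zero n

/-- The event on which the noise concentrates well enough for the theorem to hold. -/
def GoodNoise (p : ℝ) (cl : Fin n → Fin k) (E : Matrix (Fin n) (Fin n) ℝ) : Prop :=
  IsConcentrated E p (Real.log n) (rowScale n p) (powScale n p) (2 * ⌈Real.log n⌉₊) (testSets cl)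

namespace GoodNoise

lemma powEntryBound (hB : GoodNoise p cl E) (h : StrongSignal n k p q)
    (hE : ∀ u v, E u v ∈ Set.Icc (-p) 1) {m : ℕ} (hm : m ≤ 2 * ⌈Real.log n⌉₊) :
    PowEntryBound E (32 * Real.log n) (rowScale n p) (powScale n p) m :=
  IsConcentrated.powEntryBound hB h.walkRegime hE (by simp [testSets]) (by simp [testSets]) hm

open scoped Matrix.Norms.L2Operator in
lemma l2_opNorm_le (hB : GoodNoise p cl E) (h : StrongSignal n k p q) (hsymm : E.IsSymm)
    (hE : ∀ u v, E u v ∈ Set.Icc (-p) 1) : ‖E‖ ≤ 3 * powScale n p := by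
  have hL := h.two_le_log
  have hb := h.walkRegime.one_le_b
  refine PowEntryBound.l2_opNorm_le h.ceil_log_ne_zero hsymm ?_ (by positivity) hb ?_
    fun m hm => hB.powEntryBound h hE hm
  · simpa using h.le_three_pow_ceil_log
  · exact le_trans (by gcongr; norm_num) h.walkRegime.bernstein_le

lemma enorm_clusterProj_pow_mulVec_column_le (hB : GoodNoise p cl E) (h : StrongSignal n k p q)
    (hbal : Balanced n k cl) (hsymm : E.IsSymm) (hE : ∀ u v, E u v ∈ Set.Icc (-p) 1) (u : Fin n)
    {m : ℕ} (hm : m ≤ 2 * ⌈Real.log n⌉₊) :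
    SBM.enorm (clusterProj cl *ᵥ (E ^ m *ᵥ column E u)) ≤
      96 * Real.log n * √(k * p) * powScale n p ^ m := by
  have hL := h.two_le_log
  have hβ := h.walkRegime.β_nonneg
  have hsum (c : Fin k) : |∑ v ∈ cluster cl c, (E ^ m *ᵥ column E u) v| ≤
      32 * Real.log n * powScale n p ^ m *
        (setScale p (cluster cl c) + rowScale n p * charVec (cluster cl c) u) := by
    rw [sum_pow_mulVec_column hsymm, mul_right_comm]
    exact IsConcentrated.abs_pow_succ_mulVec_charVec_le hB h.walkRegime
      (fun j hj => hB.powEntryBound h hE hj) (by simp [testSets]) hm u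
  refine (enorm_clusterProj_mulVec_le h.k_pos h.sq_rowScale (by positivity)
    (h.div_le_clusterSize hbal) h.one_le_div_mul hsum).trans_eq ?_
  ring

theorem enorm_phiM_sub_phiM_mulVec_column_le (hB : GoodNoise p cl E) (h : StrongSignal n k p q)
    (hn : 0 < n) (hbal : Balanced n k cl) {lamG : Fin n → ℝ} {vG : Fin n → Fin n → ℝ}
    (hdecG : IsSpectralDecomp (meanMatrix n k p q cl) lamG vG) (hsymm : E.IsSymm)
    (hE : ∀ u v, E u v ∈ Set.Icc (-p) 1) (u : Fin n) :
    SBM.enorm ((phiM (lamG ⟨0, hn⟩) ((p - q) * ((n : ℝ) / k)) ⌈Real.log n⌉₊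
          (meanMatrix n k p q cl + E) -
        phiM (lamG ⟨0, hn⟩) ((p - q) * ((n : ℝ) / k)) ⌈Real.log n⌉₊
          (meanMatrix n k p q cl)) *ᵥ column E u) ≤
      2016 * (√(k * p) * Real.log n) + 1 / Real.log n := by
  have hL := h.two_le_log
  have hβ := h.walkRegime.β_nonneg
  have hgap := h.three_mul_powScale_le
  have hmu : 0 < (p - q) * ((n : ℝ) / k) :=
    mul_pos (sub_pos.2 h.q_lt_p) (div_pos h.n_pos (one_pos.trans_le h.one_le_k))
  have hnorm := hdecG.norm_eq_zero_index
    (dotProduct_meanMatrix_mulVec_nonneg h.q_nonneg h.q_lt_p cl) hn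
  have hδ : 1 / (16 * Real.log n) ≤ 1 := (div_le_one (by positivity)).2 (by linarith)
  have hε : 1 / (100 * Real.log n) ≤ 1 / 10 := by gcongr; linarith
  calc _ ≤ 7 * (96 * Real.log n * √(k * p)) *
          (1 + 1 / (16 * Real.log n) + 5 * (1 / (100 * Real.log n))) ^ ⌈Real.log n⌉₊ +
        (3 * (1 / (100 * Real.log n))) ^ ⌈Real.log n⌉₊ * SBM.enorm (column E u) :=
        enorm_phiM_add_sub_phiM_mulVec_le hmu
          (hnorm ▸ mul_div_le_norm_meanMatrix hn h.k_pos h.q_nonneg h.q_lt_p cl) hnorm.le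
          (meanMatrix_mul_clusterProj p q cl) (by positivity) hδ
          (norm_psi_meanMatrix_le hn h.k_pos h.q_nonneg h.q_lt_p hdecG (by positivity)
            fun c => (hbal c).2)
          hε ((hB.l2_opNorm_le h hsymm hE).trans hgap) hβ (by linarith) h.ceil_log_ne_zero
          fun m hm => hB.enorm_clusterProj_pow_mulVec_column_le h hbal hsymm hE u hm
    _ ≤ 7 * (96 * Real.log n * √(k * p)) * 3 +
        (3 * (1 / (100 * Real.log n))) ^ ⌈Real.log n⌉₊ * n := by
        gcongr
        · exact h.one_add_noise_pow_le
        · exact enorm_column_le (h.walkRegime.abs_entry_le_one hE) u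
    _ ≤ 7 * (96 * Real.log n * √(k * p)) * 3 + 1 / Real.log n := by gcongr; exact h.noise_pow_mul_le
    _ = _ := by ring

end GoodNoise

end ConcentratedNoise

section MainTheorem

lemma one_sub_measureReal_le_of_ae {Ω : Type*} [MeasurableSpace Ω] {μ : Measure Ω}
    [IsProbabilityMeasure μ] {s t : Set Ω} (h : ∀ᵐ ω ∂μ, ω ∉ s → ω ∈ t) :
    1 - μ.real s ≤ μ.real t := by
  have hunion : μ.real (s ∪ t) = 1 := by
    rw [← probReal_univ (μ := μ)]
    refine measureReal_congr (Filter.eventuallyEq_univ.2 (h.mono fun ω hω => ?_))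
    by_cases hs : ω ∈ s
    exacts [Or.inl hs, Or.inr (hω hs)]
  linarith [measureReal_union_le (μ := μ) s t]

variable {n k : ℕ} {p q : ℝ} {cl : Fin n → Fin k} {Ω : Type*} [MeasurableSpace Ω] {μ : Measure Ω}
  [IsProbabilityMeasure μ] {E : Ω → Matrix (Fin n) (Fin n) ℝ}

lemma IsCenteredNoise.measureReal_not_goodNoise_le (hE : IsCenteredNoise E p μ)
    (h : StrongSignal n k p q) (hbal : Balanced n k cl) :
    μ.real {ω | ¬ GoodNoise p cl (E ω)} ≤ 18 / (n : ℝ) ^ 4 := by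
  have hL := h.two_le_log
  have hb := h.walkRegime.one_le_b
  have hn := h.n_pos
  have hn1 : (1 : ℝ) ≤ n := Nat.one_le_cast.2 (by linarith [h.two_le_n])
  have hcard : (#(testSets cl) : ℝ) ≤ 3 * n := by
    have := card_testSets_le cl
    have := h.k_le_n hbal
    have := h.two_le_n
    exact_mod_cast (by omega : #(testSets cl) ≤ 3 * n)
  have hlength : (2 * ⌈Real.log n⌉₊ : ℕ) + (1 : ℝ) ≤ 3 * n := by
    have : (⌈Real.log n⌉₊ : ℝ) ≤ n := Nat.cast_le.2 (Nat.ceil_le.2 (Real.log_le_self hn.le))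
    push_cast
    linarith
  have hexp : Real.exp (-(7 * Real.log n)) = 1 / (n : ℝ) ^ 7 := by
    rw [Real.exp_neg, ← Nat.cast_ofNat (R := ℝ), Real.exp_nat_mul, Real.exp_log hn, one_div]
  calc _ ≤ _ := hE.measureReal_not_isConcentrated_le h.p_le_one (by linarith) (by linarith)
        (lt_of_lt_of_le (by positivity) h.walkRegime.bernstein_le) (2 * ⌈Real.log n⌉₊) (testSets cl)
    _ ≤ 3 * n * (3 * n * (n * (2 * (1 / (n : ℝ) ^ 7)))) := by
        rw [hexp, Fintype.card_fin]; gcongr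
    _ = 18 / (n : ℝ) ^ 4 := by field_simp; norm_num

theorem poly_difference_noise_bound_general (hn : 0 < n) (hq : 0 ≤ q) (hpq : q < p) (hp : p ≤ 1)
    (hbal : Balanced n k cl)
    (hsize : (n : ℝ) ≥ 10 ^ 10 * k ^ 2 * p * (Real.log n) ^ 12 / (p - q) ^ 2)
    {lamG : Fin n → ℝ} {vG : Fin n → Fin n → ℝ}
    (hdecG : IsSpectralDecomp (meanMatrix n k p q cl) lamG vG) (hE : IsCenteredNoise E p μ)
    (u : Fin n) :
    1 - 18 / (n : ℝ) ^ 4 ≤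
      μ.real {ω | SBM.enorm ((phiM (lamG ⟨0, hn⟩) ((p - q) * ((n : ℝ) / k)) ⌈Real.log n⌉₊
              (meanMatrix n k p q cl + E ω) -
            phiM (lamG ⟨0, hn⟩) ((p - q) * ((n : ℝ) / k)) ⌈Real.log n⌉₊
              (meanMatrix n k p q cl)) *ᵥ column (E ω) u) ≤
          2016 * (√(k * p) * Real.log n) + 1 / Real.log n} := by
  rcases Nat.lt_or_ge n 2 with hn2 | hn2
  · obtain rfl : n = 1 := by omega
    exact le_trans (by norm_num) measureReal_nonneg
  have h : StrongSignal n k p q := ⟨hn2, (cl u).pos, hq, hpq, hp, hsize⟩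
  refine le_trans (sub_le_sub_left (hE.measureReal_not_goodNoise_le h hbal) 1) ?_
  refine one_sub_measureReal_le_of_ae (hE.mem_Icc.mono fun ω hentry hgood => ?_)
  exact (not_not.1 hgood).enorm_phiM_sub_phiM_mulVec_column_le h hn hbal hdecG (hE.isSymm ω)
    hentry u

lemma mul_log_add_le_mul_log_sq_add (n : ℕ) {s : ℝ} (hs : 0 ≤ s) :
    2016 * (s * Real.log n) + 1 / Real.log n ≤
      7000000 * (s * Real.log n ^ 2 + 1 / Real.log n) := by
  have hinv : 0 ≤ 1 / Real.log n := one_div_nonneg.2 (Real.log_natCast_nonneg n)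
  have hlog : Real.log n ≤ 2 * Real.log n ^ 2 := by
    rcases Nat.lt_or_ge n 2 with hn | hn
    · interval_cases n <;> simp
    · have : Real.log 2 ≤ Real.log n := Real.log_le_log two_pos (Nat.ofNat_le_cast.2 hn)
      nlinarith [Real.log_two_gt_d9]
  calc 2016 * (s * Real.log n) + 1 / Real.log n
      ≤ 2016 * (s * (2 * Real.log n ^ 2)) + 1 / Real.log n := by gcongr
    _ = 4032 * (s * Real.log n ^ 2) + 1 * (1 / Real.log n) := by ring
    _ ≤ 7000000 * (s * Real.log n ^ 2) + 7000000 * (1 / Real.log n) := by gcongr <;> norm_num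
    _ = _ := by ring

end MainTheorem

end SBM

open SBM in
/-- There are constants `C, c > 0` such that: if the partition is balanced,
`k ≥ 2` and `n ≥ C·k²·p·(log n)¹²/(p−q)²`, then for every vertex `u`, with probability at
least `1 − c·n^{−2}` over `E`, `‖(φ(Ĝ) − φ(G))·E_u‖ ≤ 7·10⁶(√(kp)(log n)² + 1/log n)`. -/
theorem poly_difference_noise_bound :
    ∃ C > (0 : ℝ), ∃ c > (0 : ℝ),
      ∀ (n k : ℕ) (hn : 0 < n) (hk : 2 ≤ k)
        (p q : ℝ) (hq : 0 ≤ q) (hpq : q < p) (hp : p ≤ 1)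
        (cl : Fin n → Fin k) (hbal : Balanced n k cl)
        (hsize : (n : ℝ) ≥ C * k ^ 2 * p * (Real.log n) ^ 12 / (p - q) ^ 2)
        (lamG : Fin n → ℝ) (vG : Fin n → Fin n → ℝ)
        (hdecG : IsSpectralDecomp (meanMatrix n k p q cl) lamG vG)
        (Ω : Type) (_ : MeasureSpace Ω) (_ : IsProbabilityMeasure (ℙ : Measure Ω))
        (E : Ω → Matrix (Fin n) (Fin n) ℝ) (hE : NoiseModel p q cl E)
        (u : Fin n),
        ENNReal.ofReal (1 - c / (n : ℝ) ^ 2) ≤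
          ℙ {ω : Ω |
            SBM.enorm ((phiM (lamG ⟨0, hn⟩) ((p - q) * ((n : ℝ) / k)) ⌈Real.log n⌉₊
                  (meanMatrix n k p q cl + E ω) -
                phiM (lamG ⟨0, hn⟩) ((p - q) * ((n : ℝ) / k)) ⌈Real.log n⌉₊
                  (meanMatrix n k p q cl)).mulVec (column (E ω) u)) ≤
              7000000 * (Real.sqrt ((k : ℝ) * p) * (Real.log n) ^ 2 + 1 / Real.log n)} := by
  refine ⟨10 ^ 10, by norm_num, 18, by norm_num, ?_⟩
  intro n k hn _ p q hq hpq hp cl hbal hsize lamG vG hdecG Ω _ _ E hE u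
  have hn1 : (1 : ℝ) ≤ n := Nat.one_le_cast.2 hn
  have hgeneral := poly_difference_noise_bound_general hn hq hpq hp hbal hsize hdecG
    (hE.isCenteredNoise hq hpq.le hp) u
  refine (ENNReal.ofReal_le_ofReal (le_trans ?_ hgeneral)).trans ?_
  · gcongr
    norm_num
  · rw [ofReal_measureReal]
    exact measure_mono fun ω hω => hω.trans (mul_log_add_le_mul_log_sq_add n (Real.sqrt_nonneg _))
end
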